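/- arXiv:2010.03353 — 2 statements merged into one kernel-verified Lean document; each statement's English description precedes it below -/
import Mathlib

section
/- (Korn–Maxwell–Sobolev, sufficiency, 1 < p < 3) Let 1 < p < 3 and let 𝔸 be an elliptic first-order homogeneous operator on ℝ³ with matrix representative A ∈ 𝓛(ℝ^{3×3}; ℝᴺ). Then there is c = c(p, A) > 0 such that for every open Ω ⊂ ℝ³ and every F ∈ C_c^∞(Ω; ℝ^{3×3}): ‖F‖_{L^{p*}(Ω)} ≤ c(‖A[F]‖_{L^{p*}(Ω)} + ‖curl F‖_{Lᵖ(Ω)}), where p* = 3p/(3-p). -/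
open MeasureTheory
open scoped ENNReal

noncomputable def pd (j : Fin 3) (f : (Fin 3 → ℝ) → ℝ) (x : Fin 3 → ℝ) : ℝ :=
  fderiv ℝ f x (Pi.single j 1)

/-- The row-wise curl of a matrix field `F : ℝ³ → ℝ^{3×3}`. -/
noncomputable def mcurl (F : (Fin 3 → ℝ) → Fin 3 → Fin 3 → ℝ) (x : Fin 3 → ℝ) :
    Fin 3 → Fin 3 → ℝ :=
  fun i => ![pd 1 (fun y => F y i 2) x - pd 2 (fun y => F y i 1) x,
             pd 2 (fun y => F y i 0) x - pd 0 (fun y => F y i 2) x,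
             pd 0 (fun y => F y i 1) x - pd 1 (fun y => F y i 0) x]

/-- `A` induces an elliptic operator `𝔸u = A[∇u]`: the symbol `v ↦ A[v ⊗ ξ]` is
injective for every `ξ ≠ 0`. -/
def IsElliptic {N : ℕ} (A : (Fin 3 → Fin 3 → ℝ) →ₗ[ℝ] (Fin N → ℝ)) : Prop :=
  ∀ ξ : Fin 3 → ℝ, ξ ≠ 0 →
    Function.Injective (fun v : Fin 3 → ℝ => A (fun i j => v i * ξ j))



namespace KMS
open MeasureTheory FourierTransform
open scoped ENNReal SchwartzMap

abbrev E := EuclideanSpace ℝ (Fin 3)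

/-- integrable bounded functions -/
structure W (φ : E → ℂ) : Prop where
  int : Integrable φ
  bdd : ∃ B : ℝ, ∀ x, ‖φ x‖ ≤ B

lemma W.mul {φ m : E → ℂ} (h : W φ) (hm : AEStronglyMeasurable m volume) {K : ℝ}
    (hK : ∀ x, ‖m x‖ ≤ K) : W (fun x => m x * φ x) := by
  refine ⟨h.int.bdd_mul (c := K) hm (Filter.Eventually.of_forall hK), ?_⟩
  obtain ⟨B, hB⟩ := h.bdd
  refine ⟨K * B, fun x => ?_⟩
  rw [norm_mul]
  exact mul_le_mul (hK x) (hB x) (norm_nonneg _) ((norm_nonneg _).trans (hK x))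

lemma memLp_of_int_bdd {f : E → ℂ} {q r : ℝ≥0∞} (hq : MemLp f q volume) (hqr : q ≤ r) (hq0 : q ≠ 0)
    (hr : r ≠ ∞) {B : ℝ} (hB : ∀ x, ‖f x‖ ≤ B) : MemLp f r volume := by
  have hqt : q ≠ ∞ := ne_top_of_le_ne_top hr hqr
  have hr0 : r ≠ 0 := fun h => hq0 (le_antisymm (h ▸ hqr) zero_le)
  refine ⟨hq.1, ?_⟩
  rw [eLpNorm_lt_top_iff_lintegral_rpow_enorm_lt_top hr0 hr]
  have h1 := (eLpNorm_lt_top_iff_lintegral_rpow_enorm_lt_top hq0 hqt).1 hq.2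
  have hle : q.toReal ≤ r.toReal := ENNReal.toReal_mono hr hqr
  calc ∫⁻ a, ‖f a‖ₑ ^ r.toReal ≤ ∫⁻ a, (ENNReal.ofReal B) ^ (r.toReal - q.toReal) * ‖f a‖ₑ ^ q.toReal := by
        apply lintegral_mono
        intro x
        have : ‖f x‖ₑ ≤ ENNReal.ofReal B := by
          rw [← ofReal_norm]; exact ENNReal.ofReal_le_ofReal (hB x)
        calc ‖f x‖ₑ ^ r.toReal = ‖f x‖ₑ ^ ((r.toReal - q.toReal) + q.toReal) := by congr 1; ring
          _ = ‖f x‖ₑ ^ (r.toReal - q.toReal) * ‖f x‖ₑ ^ q.toReal :=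
            ENNReal.rpow_add_of_nonneg _ _ (by linarith) ENNReal.toReal_nonneg
          _ ≤ _ := mul_le_mul' (ENNReal.rpow_le_rpow this (by linarith)) le_rfl
    _ = (ENNReal.ofReal B) ^ (r.toReal - q.toReal) * ∫⁻ a, ‖f a‖ₑ ^ q.toReal := by
        rw [lintegral_const_mul']
        exact ENNReal.rpow_ne_top_of_nonneg (by linarith) ENNReal.ofReal_ne_top
    _ < ∞ := ENNReal.mul_lt_top (ENNReal.rpow_lt_top_of_nonneg (by linarith) ENNReal.ofReal_ne_top) h1

lemma W.memLp {φ : E → ℂ} (h : W φ) {r : ℝ≥0∞} (hr : 1 ≤ r) (hrt : r ≠ ∞) : MemLp φ r volume := by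
  obtain ⟨B, hB⟩ := h.bdd
  exact memLp_of_int_bdd (memLp_one_iff_integrable.2 h.int) hr one_ne_zero hrt hB

lemma fourier_selfadj {f g : E → ℂ} (hf : Integrable f) (hg : Integrable g) :
    ∫ ξ, 𝓕 f ξ * g ξ = ∫ x, f x * 𝓕 g x := by
  have := VectorFourier.integral_fourierIntegral_smul_eq_flip (L := innerₗ E) (μ := volume) (ν := volume)
    Real.continuous_fourierChar continuous_inner hf hg
  rw [flip_innerₗ] at this
  exact this

lemma bdd_fourier {φ : E → ℂ} (x : E) : ‖𝓕 φ x‖ ≤ ∫ v, ‖φ v‖ :=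
  VectorFourier.norm_fourierIntegral_le_integral_norm _ _ _ _ _

lemma cont_fourier {φ : E → ℂ} (h : Integrable φ) : Continuous (𝓕 φ) :=
  VectorFourier.fourierIntegral_continuous Real.continuous_fourierChar continuous_inner h

lemma fourier_ae_eq {φ : E → ℂ} (h : W φ) :
    (𝓕 (((h.memLp one_le_two ENNReal.ofNat_ne_top).toLp φ : Lp ℂ 2 (volume : Measure E))) : Lp ℂ 2 (volume : Measure E)) =ᵐ[volume] 𝓕 φ := by
  set φ2 : Lp ℂ 2 (volume : Measure E) := (h.memLp one_le_two ENNReal.ofNat_ne_top).toLp φ with hφ2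
  have key := Lp.fourier_toTemperedDistribution_eq φ2
  apply ae_eq_of_integral_contDiff_smul_eq
  · exact (Lp.memLp _).locallyIntegrable one_le_two
  · exact (cont_fourier h.int).locallyIntegrable
  · intro g hg hgs
    have hgs' : HasCompactSupport (fun x => (g x : ℂ)) := hgs.comp_left (g := fun x : ℝ => (x:ℂ)) (by simp)
    have hg' : ContDiff ℝ (⊤ : ℕ∞) (fun x => (g x : ℂ)) := Complex.ofRealCLM.contDiff.comp hg
    let G : 𝓢(E, ℂ) := hgs'.toSchwartzMap hg'
    have := congrArg (fun T => T G) key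
    simp only [TemperedDistribution.fourier_apply, Lp.toTemperedDistribution_apply] at this
    have e1 : ∫ x, g x • (𝓕 φ2 : Lp ℂ 2 (volume : Measure E)) x = ∫ x, G x • (𝓕 φ2 : Lp ℂ 2 (volume : Measure E)) x := by
      congr 1
    rw [e1, ← this]
    have e2 : ∫ x, g x • 𝓕 φ x = ∫ x, 𝓕 φ x * G x := by
      congr 1; ext x; simp [G, mul_comm]
    rw [e2, fourier_selfadj h.int G.integrable]
    apply integral_congr_ae
    filter_upwards [(h.memLp one_le_two ENNReal.ofNat_ne_top).coeFn_toLp] with x hx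
    rw [hφ2, hx, ← SchwartzMap.fourier_coe]
    simp [mul_comm]

lemma plancherel {φ : E → ℂ} (h : W φ) : eLpNorm (𝓕 φ) 2 volume = eLpNorm φ 2 volume := by
  rw [← eLpNorm_congr_ae (fourier_ae_eq h), ← eLpNorm_congr_ae (h.memLp one_le_two ENNReal.ofNat_ne_top).coeFn_toLp]
  have := Lp.norm_fourier_eq ((h.memLp one_le_two ENNReal.ofNat_ne_top).toLp φ : Lp ℂ 2 (volume : Measure E))
  rw [Lp.norm_def, Lp.norm_def] at this
  exact (ENNReal.toReal_eq_toReal_iff' (Lp.eLpNorm_ne_top _) (Lp.eLpNorm_ne_top _)).1 this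

lemma W.memLp_fourier {φ : E → ℂ} (h : W φ) {r : ℝ≥0∞} (hr : 2 ≤ r) (hrt : r ≠ ∞) : MemLp (𝓕 φ) r volume := by
  apply memLp_of_int_bdd (q := 2) _ hr (by norm_num) hrt bdd_fourier
  exact ⟨(cont_fourier h.int).aestronglyMeasurable, by rw [plancherel h]; exact (h.memLp one_le_two ENNReal.ofNat_ne_top).2⟩

lemma W.conv {φ ψ : E → ℂ} (h : W φ) (h' : W ψ) :
    W (convolution φ ψ (ContinuousLinearMap.mul ℂ ℂ) volume) := by
  refine ⟨h.int.integrable_convolution _ h'.int, ?_⟩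
  obtain ⟨B, hB⟩ := h'.bdd
  refine ⟨∫ t, ‖φ t‖ * B, fun x => ?_⟩
  rw [convolution_def]
  apply norm_integral_le_of_norm_le (h.int.norm.mul_const B)
  filter_upwards with t
  simp only [ContinuousLinearMap.mul_apply', norm_mul]
  gcongr
  exact hB _

end KMS


namespace KMS
open MeasureTheory FourierTransform
open scoped ENNReal SchwartzMap NNReal

/-- `m` is a Fourier multiplier on `L^r` with constant `K` -/
structure Good (r : ℝ≥0∞) (K : ℝ≥0) (m : E → ℂ) : Prop where
  meas : AEStronglyMeasurable m volume
  bdd : ∀ ξ, ‖m ξ‖ ≤ K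
  bound : ∀ φ, W φ → eLpNorm (𝓕 (fun ξ => m ξ * φ ξ)) r volume ≤ K * eLpNorm (𝓕 φ) r volume

lemma Good.W {r K m φ} (h : Good r K m) (hφ : W φ) : W (fun x => m x * φ x) := hφ.mul h.meas h.bdd

lemma Good.mul {r K K' m m'} (h : Good r K m) (h' : Good r K' m') :
    Good r (K * K') (fun ξ => m ξ * m' ξ) := by
  refine ⟨h.meas.mul h'.meas, fun ξ => ?_, fun φ hφ => ?_⟩
  · rw [norm_mul]; push_cast
    exact mul_le_mul (h.bdd ξ) (h'.bdd ξ) (norm_nonneg _) K.2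
  · have := h.bound _ (h'.W hφ)
    simp only [mul_assoc]
    refine this.trans ?_
    push_cast
    rw [mul_assoc]
    gcongr
    exact h'.bound _ hφ

lemma fourier_add_fun {f g : E → ℂ} (hf : Integrable f) (hg : Integrable g) :
    𝓕 (fun x => f x + g x) = 𝓕 f + 𝓕 g := by
  have := VectorFourier.fourierIntegral_add (L := innerₗ E) (μ := volume)
    Real.continuous_fourierChar continuous_inner hf hg
  exact this

lemma fourier_smul_fun {f : E → ℂ} (c : ℂ) : 𝓕 (fun x => c * f x) = c • 𝓕 f := by
  have := VectorFourier.fourierIntegral_const_smul Real.fourierChar volume (innerₗ E) f c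
  exact this

lemma Good.mono {r K K' m} (h : Good r K m) (hK : K ≤ K') : Good r K' m :=
  ⟨h.meas, fun ξ => (h.bdd ξ).trans (by exact_mod_cast hK), fun φ hφ => (h.bound φ hφ).trans (by gcongr)⟩

lemma Good.add {r K K' m m'} (hr : 1 ≤ r) (h : Good r K m) (h' : Good r K' m') :
    Good r (K + K') (fun ξ => m ξ + m' ξ) := by
  refine ⟨h.meas.add h'.meas, fun ξ => ?_, fun φ hφ => ?_⟩
  · push_cast
    exact (norm_add_le _ _).trans (add_le_add (h.bdd ξ) (h'.bdd ξ))
  · simp only [add_mul]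
    rw [fourier_add_fun (h.W hφ).int (h'.W hφ).int]
    refine (eLpNorm_add_le (cont_fourier (h.W hφ).int).aestronglyMeasurable
      (cont_fourier (h'.W hφ).int).aestronglyMeasurable hr).trans ?_
    push_cast
    rw [add_mul]
    exact add_le_add (h.bound _ hφ) (h'.bound _ hφ)

lemma good_const {r} (c : ℂ) : Good r ‖c‖₊ (fun _ => c) := by
  refine ⟨aestronglyMeasurable_const, fun ξ => le_rfl, fun φ hφ => ?_⟩
  rw [fourier_smul_fun, eLpNorm_const_smul]
  rfl

lemma Good.congr_ae {r K m m'} (h : Good r K m) (he : m' =ᵐ[volume] m) (hb : ∀ ξ, ‖m' ξ‖ ≤ K) :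
    Good r K m' := by
  refine ⟨h.meas.congr he.symm, hb, fun φ hφ => ?_⟩
  have : 𝓕 (fun ξ => m' ξ * φ ξ) = 𝓕 (fun ξ => m ξ * φ ξ) := by
    ext x
    apply Real.fourier_congr_ae
    filter_upwards [he] with y hy
    rw [hy]
  rw [this]
  exact h.bound φ hφ

/-- sign of a linear functional -/
noncomputable def sg (θ ξ : E) : ℂ := if 0 ≤ inner ℝ θ ξ then 1 else -1

lemma norm_sg (θ ξ : E) : ‖sg θ ξ‖ = 1 := by
  unfold sg; split_ifs <;> simp

lemma meas_sg2 : Measurable (fun z : E × E => sg z.1 z.2) := by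
  unfold sg
  apply Measurable.ite _ measurable_const measurable_const
  exact measurableSet_le measurable_const (by fun_prop)

lemma meas_sg (θ : E) : Measurable (sg θ) := meas_sg2.comp (measurable_const.prodMk measurable_id)

lemma sg_id (θ a b : E) : sg θ a * sg θ b + 1 = sg θ (a + b) * (sg θ a + sg θ b) := by
  unfold sg
  rw [inner_add_right]
  split_ifs <;> first | (norm_num; done) | (exfalso; linarith)

lemma good_sg_two (θ : E) : Good 2 1 (sg θ) := by
  refine ⟨(meas_sg θ).aestronglyMeasurable, fun ξ => by simp [norm_sg], fun φ hφ => ?_⟩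
  have hW : W (fun ξ => sg θ ξ * φ ξ) := hφ.mul (meas_sg θ).aestronglyMeasurable (K := 1) (fun ξ => by simp [norm_sg])
  rw [plancherel hW, plancherel hφ]
  simp only [ENNReal.coe_one, one_mul]
  apply eLpNorm_mono
  intro x
  simp [norm_sg]

lemma conv_integrable {φ ψ : E → ℂ} (h : W φ) (h' : W ψ) (x : E) :
    Integrable (fun t => φ t * ψ (x - t)) := by
  obtain ⟨B, hB⟩ := h'.bdd
  refine h.int.mul_bdd (c := B) ?_ (Filter.Eventually.of_forall fun t => hB _)
  exact (h'.int.comp_sub_left x).aestronglyMeasurable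


lemma cotlar (θ : E) {φ : E → ℂ} (hφ : W φ) (x : E) :
    𝓕 (fun ξ => sg θ ξ * φ ξ) x * 𝓕 (fun ξ => sg θ ξ * φ ξ) x + 𝓕 φ x * 𝓕 φ x
     = 2 * 𝓕 (fun ξ => sg θ ξ * (convolution φ (fun ξ => sg θ ξ * φ ξ) (ContinuousLinearMap.mul ℂ ℂ) volume) ξ) x := by
  set ψ : E → ℂ := fun ξ => sg θ ξ * φ ξ with hψ
  have hW : W ψ := hφ.mul (meas_sg θ).aestronglyMeasurable (K := 1) (fun ξ => by simp [norm_sg])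
  rw [← Real.fourier_mul_convolution_eq hW.int hW.int, ← Real.fourier_mul_convolution_eq hφ.int hφ.int,
    ← Pi.add_apply, ← fourier_add_fun (hW.conv hW).int (hφ.conv hφ).int]
  have : (fun ξ => (convolution ψ ψ (ContinuousLinearMap.mul ℂ ℂ) volume) ξ + (convolution φ φ (ContinuousLinearMap.mul ℂ ℂ) volume) ξ) = fun ξ => 2 * (sg θ ξ * (convolution φ ψ (ContinuousLinearMap.mul ℂ ℂ) volume) ξ) := by
    ext ξ
    have hc : (convolution φ ψ (ContinuousLinearMap.mul ℂ ℂ) volume) ξ = (convolution ψ φ (ContinuousLinearMap.mul ℂ ℂ) volume) ξ := by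
      rw [← convolution_flip]
      congr 1
      ext; simp
    have : 2 * (sg θ ξ * (convolution φ ψ (ContinuousLinearMap.mul ℂ ℂ) volume) ξ) = sg θ ξ * ((convolution φ ψ (ContinuousLinearMap.mul ℂ ℂ) volume) ξ + (convolution ψ φ (ContinuousLinearMap.mul ℂ ℂ) volume) ξ) := by rw [← hc]; ring
    rw [this]
    simp only [convolution_def, ContinuousLinearMap.mul_apply']
    rw [← integral_add (conv_integrable hW hW ξ) (conv_integrable hφ hφ ξ),
      ← integral_add (conv_integrable hφ hW ξ) (conv_integrable hW hφ ξ), ← integral_const_mul]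
    congr 1; ext t
    have := sg_id θ t (ξ - t)
    rw [add_sub_cancel] at this
    simp only [hψ]
    linear_combination (φ t * φ (ξ - t)) * this
  rw [this, fourier_smul_fun]
  rfl

lemma eLpNorm_sq {f : E → ℂ} (r : ℝ≥0∞) (hr0 : r ≠ 0) (hr : r ≠ ∞) :
    eLpNorm (fun x => f x * f x) r volume = eLpNorm f (2 * r) volume ^ 2 := by
  have h2 : (2 * r) ≠ ∞ := ENNReal.mul_ne_top (by simp) hr
  have h20 : (2 * r) ≠ 0 := by simp [hr0]
  rw [eLpNorm_eq_lintegral_rpow_enorm_toReal hr0 hr, eLpNorm_eq_lintegral_rpow_enorm_toReal h20 h2,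
    ← ENNReal.rpow_natCast, ← ENNReal.rpow_mul]
  have hpos : 0 < r.toReal := ENNReal.toReal_pos hr0 hr
  congr 1
  · congr 1; ext x
    rw [enorm_mul, ← sq, ← ENNReal.rpow_natCast, ← ENNReal.rpow_mul]
    simp
  · simp

lemma eLpNorm_mul_le' {f g : E → ℂ} (r : ℝ≥0∞) (hf : AEStronglyMeasurable f volume)
    (hg : AEStronglyMeasurable g volume) :
    eLpNorm (fun x => f x * g x) r volume ≤ eLpNorm f (2 * r) volume * eLpNorm g (2 * r) volume := by
  have : ENNReal.HolderTriple (2 * r) (2 * r) r := ⟨by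
    rw [ENNReal.mul_inv (by simp) (by simp), ← two_mul, ← mul_assoc, ENNReal.mul_inv_cancel (by simp) (by simp), one_mul]⟩
  have h := eLpNorm_smul_le_mul_eLpNorm (p := 2 * r) (q := 2 * r) (r := r) hg hf
  exact h

lemma quad_bound {a b : ℝ≥0∞} {K : ℝ≥0} (ha : a ≠ ∞) (hb : b ≠ ∞) (h : a ^ 2 ≤ 2 * (K * (b * a)) + b ^ 2) :
    a ≤ ((2 * K + 1 : ℝ≥0) : ℝ≥0∞) * b := by
  lift a to ℝ≥0 using ha
  lift b to ℝ≥0 using hb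
  norm_cast at h ⊢
  have h' : (a : ℝ) ^ 2 ≤ 2 * (K * (b * a)) + b ^ 2 := by exact_mod_cast h
  have : (a : ℝ) ≤ (2 * K + 1) * b := by
    by_contra! hc
    have hK := K.2; have ha := a.2; have hb := b.2
    simp only [NNReal.val_eq_coe] at hK ha hb
    nlinarith [mul_nonneg hK hb]
  exact_mod_cast this

lemma good_sg_step {r : ℝ≥0∞} (hr : 2 ≤ r) (hrt : r ≠ ∞) {K : ℝ≥0} (θ : E) (h : Good r K (sg θ)) :
    Good (2 * r) (2 * K + 1) (sg θ) := by
  have hr0 : r ≠ 0 := fun h0 => by simp [h0] at hr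
  refine ⟨h.meas, fun ξ => by simp [norm_sg], fun φ hφ => ?_⟩
  have hW := h.W hφ
  have h2r : 2 ≤ 2 * r := hr.trans (by rw [two_mul]; exact le_add_self)
  have h2t : (2 * r) ≠ ∞ := ENNReal.mul_ne_top (by simp) hrt
  apply quad_bound (hW.memLp_fourier h2r h2t).2.ne (hφ.memLp_fourier h2r h2t).2.ne
  set ψ : E → ℂ := fun ξ => sg θ ξ * φ ξ with hψ
  have hc := hφ.conv hW
  have e : (fun x => 𝓕 ψ x * 𝓕 ψ x) = (2:ℂ) • 𝓕 (fun ξ => sg θ ξ * (convolution φ ψ (ContinuousLinearMap.mul ℂ ℂ) volume) ξ) + (fun x => -(𝓕 φ x * 𝓕 φ x)) := by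
    ext x
    have := cotlar θ hφ x
    simp only [Pi.add_apply, Pi.smul_apply, smul_eq_mul]
    rw [← hψ] at this
    linear_combination this
  have m1 := (cont_fourier hφ.int).aestronglyMeasurable (μ := volume)
  have m2 := (cont_fourier hW.int).aestronglyMeasurable (μ := volume)
  have m3 := (cont_fourier (h.W hc).int).aestronglyMeasurable (μ := volume)
  rw [← eLpNorm_sq r hr0 hrt, ← eLpNorm_sq r hr0 hrt, e]
  refine (eLpNorm_add_le (m3.const_smul _) (m1.mul m1).neg (one_le_two.trans hr)).trans ?_
  apply add_le_add
  · rw [eLpNorm_const_smul]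
    have : ‖(2:ℂ)‖ₑ = 2 := by
      rw [← ofReal_norm]; simp
    rw [this]
    gcongr
    refine (h.bound _ hc).trans ?_
    gcongr
    have : 𝓕 (convolution φ ψ (ContinuousLinearMap.mul ℂ ℂ) volume) = fun x => 𝓕 φ x * 𝓕 ψ x := by
      ext x; exact Real.fourier_mul_convolution_eq hφ.int hW.int x
    rw [this]
    exact eLpNorm_mul_le' r m1 m2
  · exact (eLpNorm_neg (fun x => 𝓕 φ x * 𝓕 φ x) _ _).le

lemma good_sg (k : ℕ) : ∃ K : ℝ≥0, ∀ θ, Good (2 ^ (k + 1)) K (sg θ) := by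
  induction k with
  | zero => exact ⟨1, fun θ => by simpa using good_sg_two θ⟩
  | succ k ih =>
    obtain ⟨K, hK⟩ := ih
    refine ⟨2 * K + 1, fun θ => ?_⟩
    rw [pow_succ' _ (k + 1)]
    refine good_sg_step ?_ (by simp) θ (hK θ)
    rw [pow_succ]
    exact le_mul_of_one_le_left' (one_le_pow₀ one_le_two)

end KMS


namespace KMS
open MeasureTheory FourierTransform
open scoped ENNReal SchwartzMap NNReal

noncomputable abbrev mu1 : Measure ℝ := volume.restrict (Set.Icc (-1) 1)

lemma mu1_univ : mu1 Set.univ = 2 := by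
  simp [mu1]; norm_num

lemma good_integral {r : ℝ≥0∞} (hr : 1 ≤ r) (hrt : r ≠ ∞) {K : ℝ≥0} {n : ℝ → E → ℂ}
    (hn : Measurable (Function.uncurry n)) (h : ∀ s ∈ Set.Icc (-1 : ℝ) 1, Good r K (n s)) :
    Good r (2 * K) (fun ξ => ∫ s, n s ξ ∂mu1) := by
  have hr0 : r ≠ 0 := fun h => by simp [h] at hr
  have hae : ∀ᵐ s ∂mu1, s ∈ Set.Icc (-1 : ℝ) 1 := ae_restrict_mem measurableSet_Icc
  refine ⟨?_, ?_, ?_⟩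
  · exact (hn.stronglyMeasurable.integral_prod_left' (μ := mu1)).aestronglyMeasurable
  · intro ξ
    refine (norm_integral_le_of_norm_le_const (C := K) ?_).trans ?_
    · filter_upwards [hae] with s hs using (h s hs).bdd ξ
    · simp [Measure.real, mul_comm]; norm_num
  · intro φ hφ
    set φ' := hφ.int.1.mk φ with hφ'
    have hφm : Measurable φ' := hφ.int.1.stronglyMeasurable_mk.measurable
    have hφe : φ =ᵐ[volume] φ' := hφ.int.1.ae_eq_mk
    have hφi : Integrable φ' := hφ.int.congr hφe
    let G : ℝ → E → ℂ := fun s x => 𝓕 (fun ξ => n s ξ * φ ξ) x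
    have hG : ∀ s x, G s x = ∫ ξ, Real.fourierChar (-(inner ℝ ξ x)) • (n s ξ * φ' ξ) := by
      intro s x
      simp only [G]
      rw [Real.fourier_congr_ae (f₂ := fun ξ => n s ξ * φ' ξ), Real.fourier_eq]
      filter_upwards [hφe] with y hy
      rw [hy]
    have hGm : Measurable (Function.uncurry G) := by
      have : Function.uncurry G = fun z : ℝ × E => ∫ ξ, Real.fourierChar (-(inner ℝ ξ z.2)) • (n z.1 ξ * φ' ξ) := by
        ext z; exact hG z.1 z.2
      rw [this]
      apply StronglyMeasurable.measurable
      apply StronglyMeasurable.integral_prod_right' (f := fun z : (ℝ × E) × E =>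
        Real.fourierChar (-(inner ℝ z.2 z.1.2)) • (n z.1.1 z.2 * φ' z.2))
      apply Measurable.stronglyMeasurable
      simp only [Circle.smul_def, smul_eq_mul]
      refine Measurable.mul ?_ ?_
      · have : Continuous fun z : (ℝ × E) × E => ((Real.fourierChar (-(inner ℝ z.2 z.1.2)) : Circle) : ℂ) := by
          have h1 := Real.continuous_fourierChar
          fun_prop
        exact this.measurable
      · exact (hn.comp (by fun_prop : Measurable fun z : (ℝ × E) × E => (z.1.1, z.2))).mul (hφm.comp (by fun_prop))
    have hswap : ∀ x, 𝓕 (fun ξ => (∫ s, n s ξ ∂mu1) * φ ξ) x = ∫ s, G s x ∂mu1 := by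
      intro x
      rw [Real.fourier_congr_ae (f₂ := fun ξ => (∫ s, n s ξ ∂mu1) * φ' ξ), Real.fourier_eq]
      swap
      · filter_upwards [hφe] with y hy
        rw [hy]
      simp only [hG]
      rw [integral_integral_swap]
      · congr 1; ext ξ
        rw [← integral_mul_const, Circle.smul_def, ← integral_smul]
        rfl
      · have hb : Integrable (fun z : ℝ × E => (1:ℂ) * φ' z.2) (mu1.prod volume) :=
          Integrable.mul_prod (integrable_const _) hφi
        have hb' := (hb.norm.const_mul (K:ℝ))
        refine hb'.mono' ?_ ?_
        · apply Measurable.aestronglyMeasurable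
          simp only [Circle.smul_def, smul_eq_mul]
          refine Measurable.mul ?_ ?_
          · have : Continuous fun z : ℝ × E => ((Real.fourierChar (-(inner ℝ z.2 x)) : Circle) : ℂ) := by
              have h1 := Real.continuous_fourierChar
              fun_prop
            exact this.measurable
          · exact hn.mul (hφm.comp (by fun_prop))
        · have : ∀ᵐ z ∂(mu1.prod (volume : Measure E)), z.1 ∈ Set.Icc (-1 : ℝ) 1 :=
            Measure.quasiMeasurePreserving_fst.ae hae
          filter_upwards [this] with z hz
          simp only [Function.uncurry, Circle.norm_smul, norm_mul, one_mul]
          gcongr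
          exact (h _ hz).bdd _
    have hρ : 0 < r.toReal := ENNReal.toReal_pos hr0 hrt
    set ρ := r.toReal with hρd
    set N := eLpNorm (𝓕 φ) r volume with hN
    have step : ∫⁻ x, ‖𝓕 (fun ξ => (∫ s, n s ξ ∂mu1) * φ ξ) x‖ₑ ^ ρ ≤ (2 * K * N) ^ ρ := by
      have h1 : ∀ x, ‖𝓕 (fun ξ => (∫ s, n s ξ ∂mu1) * φ ξ) x‖ₑ ^ ρ ≤
          2 ^ (ρ - 1) * ∫⁻ s, ‖G s x‖ₑ ^ ρ ∂mu1 := by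
        intro x
        rw [hswap]
        have hm : AEStronglyMeasurable (fun s => G s x) mu1 :=
          (hGm.comp (measurable_id.prodMk measurable_const)).aestronglyMeasurable
        have := eLpNorm_le_eLpNorm_mul_rpow_measure_univ hr hm
        rw [eLpNorm_one_eq_lintegral_enorm, mu1_univ, eLpNorm_eq_lintegral_rpow_enorm_toReal hr0 hrt] at this
        have h2 := (enorm_integral_le_lintegral_enorm (fun s => G s x)).trans this
        refine (ENNReal.rpow_le_rpow h2 hρ.le).trans ?_
        rw [ENNReal.mul_rpow_of_nonneg _ _ hρ.le, ← ENNReal.rpow_mul, ← ENNReal.rpow_mul, ← hρd,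
          one_div_mul_cancel hρ.ne', ENNReal.rpow_one, mul_comm]
        apply le_of_eq
        congr 2
        simp
        field_simp
      calc _ ≤ ∫⁻ x, 2 ^ (ρ - 1) * ∫⁻ s, ‖G s x‖ₑ ^ ρ ∂mu1 := lintegral_mono h1
        _ = 2 ^ (ρ - 1) * ∫⁻ x, ∫⁻ s, ‖G s x‖ₑ ^ ρ ∂mu1 := by
          rw [lintegral_const_mul']
          exact ENNReal.rpow_ne_top_of_ne_zero (by simp) (by simp)
        _ = 2 ^ (ρ - 1) * ∫⁻ s, (∫⁻ x, ‖G s x‖ₑ ^ ρ) ∂mu1 := by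
          rw [lintegral_lintegral_swap]
          apply Measurable.aemeasurable
          exact (hGm.comp measurable_swap).enorm.pow_const ρ
        _ ≤ 2 ^ (ρ - 1) * ∫⁻ s, (K * N) ^ ρ ∂mu1 := by
          gcongr 2 ^ (ρ - 1) * ?_
          apply lintegral_mono_ae
          filter_upwards [hae] with s hs
          have := (h s hs).bound φ hφ
          rw [eLpNorm_eq_lintegral_rpow_enorm_toReal hr0 hrt, ← hN, ← hρd] at this
          have := ENNReal.rpow_le_rpow this hρ.le
          rwa [← ENNReal.rpow_mul, one_div_mul_cancel hρ.ne', ENNReal.rpow_one] at this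
        _ = _ := by
          rw [lintegral_const, mu1_univ, mul_assoc, ENNReal.mul_rpow_of_nonneg 2 _ hρ.le, mul_comm _ (2:ℝ≥0∞), ← mul_assoc]
          congr 1
          conv_lhs => rhs; rw [← ENNReal.rpow_one 2]
          rw [← ENNReal.rpow_add _ _ (by simp) (by simp)]
          congr 1; ring
    rw [eLpNorm_eq_lintegral_rpow_enorm_toReal hr0 hrt]
    refine (ENNReal.rpow_le_rpow step (by positivity)).trans ?_
    rw [← ENNReal.rpow_mul, mul_one_div_cancel hρ.ne', ENNReal.rpow_one]
    push_cast
    exact le_rfl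

/-- half space indicator -/
noncomputable def hs (θ ξ : E) : ℂ := if 0 ≤ inner ℝ θ ξ then 1 else 0

lemma meas_hs2 : Measurable (fun z : E × E => hs z.1 z.2) := by
  unfold hs
  apply Measurable.ite _ measurable_const measurable_const
  exact measurableSet_le measurable_const (by fun_prop)

lemma good_hs (k : ℕ) : ∃ K : ℝ≥0, ∀ θ, Good (2 ^ (k + 1)) K (hs θ) := by
  obtain ⟨K, hK⟩ := good_sg k
  have h1 : (1 : ℝ≥0∞) ≤ 2 ^ (k + 1) := one_le_pow₀ one_le_two
  refine ⟨‖(1/2:ℂ)‖₊ * (‖(1:ℂ)‖₊ + K), fun θ => ?_⟩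
  convert (good_const (1/2)).mul ((good_const 1).add h1 (hK θ)) using 2 with ξ
  unfold hs sg
  split_ifs <;> norm_num

/-- cone indicator -/
noncomputable def cone (a c ξ : E) : ℂ :=
  if 0 < inner ℝ c ξ ∧ |inner ℝ a ξ| ≤ inner ℝ c ξ then 1 else 0

lemma cone_eq (a c ξ : E) : cone a c ξ = (1 + (-1) * hs (-c) ξ) * (hs (c - a) ξ * hs (c + a) ξ) := by
  unfold cone hs
  simp only [inner_neg_left, inner_sub_left, inner_add_left, abs_le]
  split_ifs <;> first | (norm_num; done) | (exfalso; grind)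

lemma meas_cone (a c : E) : Measurable (cone a c) := by
  unfold cone
  apply Measurable.ite _ measurable_const measurable_const
  have h1 : MeasurableSet {ξ : E | 0 < inner ℝ c ξ} := measurableSet_lt measurable_const (by fun_prop)
  have h2 : Measurable (fun ξ : E => |inner ℝ a ξ|) := (by fun_prop : Continuous _).measurable
  have h3 : MeasurableSet {ξ : E | |inner ℝ a ξ| ≤ inner ℝ c ξ} := measurableSet_le h2 (by fun_prop)
  exact h1.inter h3

lemma good_cone {r K} (hr : 1 ≤ r) (H : ∀ θ, Good r K (hs θ)) (a c : E) :
    Good r ((1 + K) * (K * K)) (cone a c) := by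
  have := ((good_const 1).add hr ((good_const (-1)).mul (H (-c)))).mul ((H (c - a)).mul (H (c + a)))
  simp only [nnnorm_one, nnnorm_neg, one_mul] at this
  convert this using 2 with ξ
  exact cone_eq a c ξ

end KMS


namespace KMS
open MeasureTheory FourierTransform
open scoped ENNReal SchwartzMap NNReal

lemma good_ftc {r K B} (hr : 1 ≤ r) (hrt : r ≠ ∞) (H : ∀ θ, Good r K (hs θ)) (a c : E) {P P' : ℝ → E → ℂ}
    (hd : ∀ ξ s, HasDerivAt (fun s => P s ξ) (P' s ξ) s) (hcont : ∀ ξ, Continuous (fun s => P' s ξ))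
    (hm : Measurable (Function.uncurry P')) (h0 : Good r B (P (-1)))
    (h1 : ∀ s ∈ Set.Icc (-1 : ℝ) 1, Good r B (P' s)) :
    Good r ((1 + K) * (K * K) * (B + 2 * (B * K))) (fun ξ => cone a c ξ * P (inner ℝ a ξ / inner ℝ c ξ) ξ) := by
  have hn : Measurable (Function.uncurry fun (s : ℝ) ξ => P' s ξ * hs (a - s • c) ξ) := by
    refine Measurable.mul hm ?_
    exact meas_hs2.comp (by fun_prop : Measurable fun z : ℝ × E => (a - z.1 • c, z.2))
  have := (good_cone hr H a c).mul (h0.add hr (good_integral hr hrt hn (K := B * K) (fun s hs => (h1 s hs).mul (H _))))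
  convert this using 2 with ξ
  unfold cone
  split_ifs with hξ
  swap
  · simp
  obtain ⟨hc, ha⟩ := hξ
  set u := inner ℝ a ξ / inner ℝ c ξ with hu
  have hau : inner ℝ a ξ = u * inner ℝ c ξ := by rw [hu]; field_simp
  have hu1 : |u| ≤ 1 := by
    rw [hu, abs_div, abs_of_pos hc]; exact (div_le_one hc).2 ha
  rw [abs_le] at hu1
  rw [one_mul, one_mul]
  have e1 : ∀ s : ℝ, P' s ξ * hs (a - s • c) ξ = (Set.Iic u).indicator (fun s => P' s ξ) s := by
    intro s
    unfold hs
    have : (0 ≤ inner ℝ (a - s • c) ξ) ↔ s ≤ u := by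
      rw [inner_sub_left, real_inner_smul_left, hau, ← sub_mul]
      constructor
      · intro h; by_contra! hlt; nlinarith
      · intro h; exact mul_nonneg (by linarith) hc.le
    simp only [this, Set.indicator, Set.mem_Iic]
    split_ifs <;> simp
  simp only [e1]
  rw [integral_indicator measurableSet_Iic, Measure.restrict_restrict measurableSet_Iic]
  have e2 : Set.Iic u ∩ Set.Icc (-1) 1 = Set.Icc (-1) u := by
    ext s; simp only [Set.mem_inter_iff, Set.mem_Iic, Set.mem_Icc]
    constructor
    · rintro ⟨h1, h2, h3⟩; exact ⟨h2, h1⟩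
    · rintro ⟨h1, h2⟩; exact ⟨h2, h1, by linarith⟩
  rw [e2, integral_Icc_eq_integral_Ioc, ← intervalIntegral.integral_of_le hu1.1,
    intervalIntegral.integral_eq_sub_of_hasDerivAt (fun s _ => hd ξ s) ((hcont ξ).intervalIntegrable _ _)]
  ring

/-- the two dimensional version -/
lemma good_ftc2 {r K} (hr : 1 ≤ r) (hrt : r ≠ ∞) (H : ∀ θ, Good r K (hs θ)) (a b c : E) {G : ℝ × ℝ → ℂ}
    (hG : ContDiff ℝ 2 G) :
    ∃ C, Good r C (fun ξ => cone a c ξ * (cone b c ξ * G (inner ℝ a ξ / inner ℝ c ξ, inner ℝ b ξ / inner ℝ c ξ))) := by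
  -- one dimensional step
  have one : ∀ (h h' : ℝ → ℂ) (B : ℝ≥0), (∀ s, HasDerivAt h (h' s) s) → Continuous h' →
      ‖h (-1)‖₊ ≤ B → (∀ s ∈ Set.Icc (-1 : ℝ) 1, ‖h' s‖₊ ≤ B) →
      Good r ((1 + K) * (K * K) * (B + 2 * (B * K))) (fun ξ => cone b c ξ * h (inner ℝ b ξ / inner ℝ c ξ)) := by
    intro h h' B hd hc h0 h1
    refine good_ftc hr hrt H b c (P := fun s _ => h s) (P' := fun s _ => h' s) (fun _ s => hd s) (fun _ => hc)
      (hc.measurable.comp measurable_fst) ((good_const _).mono h0) (fun s hs => (good_const _).mono (h1 s hs))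
  have hcG1 : ContDiff ℝ 1 (fun z : ℝ × ℝ => fderiv ℝ G z (1, 0)) :=
    (hG.fderiv_right (m := 1) (by norm_num)).clm_apply contDiff_const
  set G1 : ℝ × ℝ → ℂ := fun z => fderiv ℝ G z (1, 0) with hG1
  have hcG2 : Continuous (fun z : ℝ × ℝ => fderiv ℝ G z (0, 1)) :=
    ((hG.fderiv_right (m := 1) (by norm_num)).clm_apply contDiff_const).continuous
  set G2 : ℝ × ℝ → ℂ := fun z => fderiv ℝ G z (0, 1) with hG2
  have hcG12 : Continuous (fun z : ℝ × ℝ => fderiv ℝ G1 z (0, 1)) :=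
    ((hcG1.fderiv_right (m := 0) (by norm_num)).clm_apply contDiff_const).continuous
  set G12 : ℝ × ℝ → ℂ := fun z => fderiv ℝ G1 z (0, 1) with hG12
  have hdG : Differentiable ℝ G := hG.differentiable (by norm_num)
  have hdG1 : Differentiable ℝ G1 := hcG1.differentiable (by norm_num)
  have bd : ∀ f : ℝ × ℝ → ℂ, Continuous f → ∃ B : ℝ≥0, ∀ s ∈ Set.Icc (-1:ℝ) 1, ∀ t ∈ Set.Icc (-1:ℝ) 1, ‖f (s, t)‖₊ ≤ B := by
    intro f hf
    obtain ⟨B, hB⟩ := (isCompact_Icc.prod isCompact_Icc : IsCompact (Set.Icc (-1:ℝ) 1 ×ˢ Set.Icc (-1:ℝ) 1)).exists_bound_of_continuousOn hf.continuousOn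
    refine ⟨B.toNNReal, fun s hs t ht => ?_⟩
    have := hB (s, t) ⟨hs, ht⟩
    rw [← NNReal.coe_le_coe, coe_nnnorm]
    exact this.trans (Real.le_coe_toNNReal B)
  obtain ⟨B0, hB0⟩ := bd _ hG.continuous
  obtain ⟨B1, hB1⟩ := bd _ hcG1.continuous
  obtain ⟨B2, hB2⟩ := bd _ hcG2
  obtain ⟨B3, hB3⟩ := bd _ hcG12
  set B := B0 + B1 + B2 + B3 with hB
  have l0 : B0 ≤ B := by rw [hB, add_assoc, add_assoc]; exact le_self_add
  have l1 : B1 ≤ B := by rw [hB, add_assoc, add_right_comm]; exact le_add_self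
  have l2 : B2 ≤ B := by rw [hB, add_right_comm]; exact le_add_self
  have l3 : B3 ≤ B := by rw [hB]; exact le_add_self
  have hm1 : (-1 : ℝ) ∈ Set.Icc (-1:ℝ) 1 := by simp
  have d1 : ∀ (F : ℝ × ℝ → ℂ), Differentiable ℝ F → ∀ s t, HasDerivAt (fun s => F (s, t)) (fderiv ℝ F (s, t) (1, 0)) s := by
    intro F hF s t
    exact (hF (s, t)).hasFDerivAt.comp_hasDerivAt s ((hasDerivAt_id s).prodMk (hasDerivAt_const s t))
  have d2 : ∀ (F : ℝ × ℝ → ℂ), Differentiable ℝ F → ∀ s t, HasDerivAt (fun t => F (s, t)) (fderiv ℝ F (s, t) (0, 1)) t := by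
    intro F hF s t
    exact (hF (s, t)).hasFDerivAt.comp_hasDerivAt t ((hasDerivAt_const t s).prodMk (hasDerivAt_id t))
  refine ⟨_, good_ftc (B := (1 + K) * (K * K) * (B + 2 * (B * K))) hr hrt H a c (P := fun s ξ => cone b c ξ * G (s, inner ℝ b ξ / inner ℝ c ξ))
    (P' := fun s ξ => cone b c ξ * G1 (s, inner ℝ b ξ / inner ℝ c ξ)) ?_ ?_ ?_ ?_ ?_⟩
  · intro ξ s
    exact (d1 G hdG s _).const_mul _
  · intro ξ
    have := hcG1.continuous
    fun_prop
  · refine Measurable.mul ((meas_cone b c).comp measurable_snd) ?_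
    refine hcG1.continuous.measurable.comp ?_
    refine measurable_fst.prodMk ?_
    refine Measurable.div ?_ ?_ <;> fun_prop
  · exact one (fun t => G (-1, t)) (fun t => G2 (-1, t)) B (fun t => d2 G hdG (-1) t) (by fun_prop)
      ((hB0 _ hm1 _ hm1).trans l0) (fun t ht => (hB2 _ hm1 _ ht).trans l2)
  · intro s hs
    exact one (fun t => G1 (s, t)) (fun t => G12 (s, t)) B (fun t => d2 G1 hdG1 s t) (by fun_prop)
      ((hB1 _ hs _ hm1).trans l1) (fun t ht => (hB3 _ hs _ ht).trans l3)

/-- smooth, positively homogeneous of degree zero -/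
structure Hom0 (m : E → ℂ) : Prop where
  smooth : ContDiffOn ℝ 2 m {0}ᶜ
  hom : ∀ t : ℝ, 0 < t → ∀ ξ, m (t • ξ) = m ξ

noncomputable abbrev ee (k : Fin 3) : E := EuclideanSpace.single k (1:ℝ)

lemma inner_ee (k : Fin 3) (ξ : E) : inner ℝ (ee k) ξ = ξ k := by
  simp [ee, EuclideanSpace.inner_single_left]

/-- face indicator -/
noncomputable def face (i : Fin 3 × Bool) (ξ : E) : ℂ :=
  cone (ee (i.1 + 1)) ((if i.2 then (1:ℝ) else -1) • ee i.1) ξ *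
    cone (ee (i.1 + 2)) ((if i.2 then (1:ℝ) else -1) • ee i.1) ξ

lemma exists_face {ξ : E} (h : ξ ≠ 0) : ∃ i, face i ξ = 1 := by
  obtain ⟨k, hk⟩ := Finite.exists_max (fun k => |ξ k|)
  have hpos : 0 < |ξ k| := by
    by_contra! hc
    apply h
    ext j
    have := (hk j).trans hc
    simpa using this
  have hσ : (if decide (0 ≤ ξ k) then (1:ℝ) else -1) * ξ k = |ξ k| := by
    by_cases h0 : 0 ≤ ξ k
    · simp [h0, abs_of_nonneg]
    · simp [h0, abs_of_neg (not_le.1 h0)]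
  refine ⟨(k, decide (0 ≤ ξ k)), ?_⟩
  unfold face cone
  simp only [real_inner_smul_left, inner_ee, hσ]
  simp [hpos, hk]

lemma good_face_piece {r K} (hr : 1 ≤ r) (hrt : r ≠ ∞) (H : ∀ θ, Good r K (hs θ)) {m : E → ℂ} (hm : Hom0 m)
    (i : Fin 3 × Bool) : ∃ C, Good r C (fun ξ => m ξ * face i ξ) := by
  obtain ⟨k, σ⟩ := i
  set c : E := (if σ then (1:ℝ) else -1) • ee k with hc
  set a : E := ee (k + 1) with ha
  set b : E := ee (k + 2) with hb
  set ε : ℝ := (if σ then (1:ℝ) else -1) with hε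
  have hε2 : ε * ε = 1 := by rw [hε]; split_ifs <;> norm_num
  let L : ℝ × ℝ → E := fun z => c + z.1 • a + z.2 • b
  have hk1 : k ≠ k + 1 := by fin_cases k <;> decide
  have hk2 : k ≠ k + 2 := by fin_cases k <;> decide
  have hL : ∀ z, L z ≠ 0 := by
    intro z hz
    have := congrArg (fun v : E => v k) hz
    rw [show L z = c + z.1 • a + z.2 • b from rfl, hc, ha, hb] at this
    clear_value ε
    simp [ee, hk1, hk2] at this
    rw [this] at hε2; norm_num at hε2
  have hLd : ContDiff ℝ 2 L := by
    simp only [L]; fun_prop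
  have hG : ContDiff ℝ 2 (fun z => m (L z)) := by
    rw [contDiff_iff_contDiffAt]
    intro z
    have : ContDiffAt ℝ 2 m (L z) := hm.smooth.contDiffAt (isOpen_compl_singleton.mem_nhds (hL z))
    exact this.comp z hLd.contDiffAt
  obtain ⟨C, hC⟩ := good_ftc2 hr hrt H a b c hG
  refine ⟨C, ?_⟩
  convert hC using 2 with ξ
  unfold face
  simp only [← hε, ← hc, ← ha, ← hb]
  by_cases hcone : cone a c ξ = 0
  · simp [hcone]
  have hpos : 0 < inner ℝ c ξ := by
    by_contra hn
    exact hcone (by simp [cone, hn])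
  have : m ξ = m (L (inner ℝ a ξ / inner ℝ c ξ, inner ℝ b ξ / inner ℝ c ξ)) := by
    rw [← hm.hom (inner ℝ c ξ)⁻¹ (inv_pos.2 hpos) ξ]
    congr 1
    have hik : inner ℝ c ξ = ε * ξ k := by rw [hc, real_inner_smul_left, inner_ee]
    have hξk : ξ k ≠ 0 := by
      intro h0; rw [hik, h0] at hpos; simp at hpos
    have hε0 : ε ≠ 0 := by intro h0; rw [h0] at hε2; norm_num at hε2
    have hεi : ε⁻¹ = ε := by
      field_simp; rw [sq, hε2]
    simp only [L]
    rw [hik, ha, hb, inner_ee, inner_ee]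
    ext j
    have hj : j = k ∨ j = k + 1 ∨ j = k + 2 := by fin_cases k <;> fin_cases j <;> decide
    have hk3 : k + 1 ≠ k + 2 := by fin_cases k <;> decide
    rcases hj with rfl | rfl | rfl
    · clear_value ε
      simp [hc, ee, hk1, hk2, hξk, hεi]
      try field_simp
    · simp [hc, ee, hk1, hk2, hk3, hk1.symm, hk2.symm, hk3.symm]; ring
    · simp [hc, ee, hk1, hk2, hk3, hk1.symm, hk2.symm, hk3.symm]; ring
  rw [← this]
  ring

lemma good_face {r K} (hr : 1 ≤ r) (H : ∀ θ, Good r K (hs θ)) (i : Fin 3 × Bool) : ∃ C, Good r C (face i) :=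
  ⟨_, (good_cone hr H _ _).mul (good_cone hr H _ _)⟩

lemma good_prod {r K} (hr : 1 ≤ r) (H : ∀ θ, Good r K (hs θ)) (S : Finset (Fin 3 × Bool)) :
    ∃ C, Good r C (fun ξ => ∏ i ∈ S, (1 + (-1) * face i ξ)) := by
  induction S using Finset.induction_on with
  | empty => simpa using ⟨_, good_const 1⟩
  | insert i S hi ih =>
    obtain ⟨C, hC⟩ := ih
    obtain ⟨D, hD⟩ := good_face hr H i
    refine ⟨?_, ?_⟩
    swap
    · simp only [Finset.prod_insert hi]
      exact ((good_const 1).add hr ((good_const (-1)).mul hD)).mul hC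

lemma good_hom0 (k : ℕ) {m : E → ℂ} (hm : Hom0 m) : ∃ C, Good (2 ^ (k + 1)) C m := by
  obtain ⟨K, H⟩ := good_hs k
  have hr : (1 : ℝ≥0∞) ≤ 2 ^ (k + 1) := one_le_pow₀ one_le_two
  have hrt : (2 ^ (k + 1) : ℝ≥0∞) ≠ ∞ := by simp
  set r : ℝ≥0∞ := 2 ^ (k + 1)
  have step : ∀ S : Finset (Fin 3 × Bool), ∃ C, Good r C (fun ξ => m ξ + (-1) * (m ξ * ∏ i ∈ S, (1 + (-1) * face i ξ))) := by
    intro S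
    induction S using Finset.induction_on with
    | empty =>
      refine ⟨?_, ?_⟩
      swap
      · convert good_const 0 using 2; simp
    | insert i S hi ih =>
      obtain ⟨C, hC⟩ := ih
      obtain ⟨D, hD⟩ := good_face_piece hr hrt H hm i
      obtain ⟨D', hD'⟩ := good_prod hr H S
      refine ⟨?_, ?_⟩
      swap
      · convert hC.add hr (hD.mul hD') using 2 with ξ
        rw [Finset.prod_insert hi]; ring
  obtain ⟨C, hC⟩ := step Finset.univ
  refine ⟨C + ‖m 0‖₊, (hC.mono le_self_add).congr_ae ?_ ?_⟩
  · have : ∀ᵐ ξ : E, ξ ≠ 0 := by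
      simp [ae_iff]
    filter_upwards [this] with ξ hξ
    obtain ⟨i, hi⟩ := exists_face hξ
    rw [Finset.prod_eq_zero (Finset.mem_univ i) (by rw [hi]; ring)]
    ring
  · intro ξ
    by_cases hξ : ξ = 0
    · rw [hξ]; push_cast; simp
    · obtain ⟨i, hi⟩ := exists_face hξ
      have := hC.bdd ξ
      rw [Finset.prod_eq_zero (Finset.mem_univ i) (by rw [hi]; ring)] at this
      push_cast
      simp only [mul_zero, add_zero] at this
      exact this.trans (by simp)

end KMS


namespace KMS
open MeasureTheory FourierTransform
open scoped ENNReal SchwartzMap NNReal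

lemma inner1 {s u : ℝ} (hs : 0 < s) (hu : 0 ≤ u) :
    ∫⁻ t in Set.Ioi (0:ℝ), (Set.Iio u).indicator (fun t => ENNReal.ofReal (t ^ (s - 1))) t = ENNReal.ofReal (u ^ s / s) := by
  rw [lintegral_indicator measurableSet_Iio, Measure.restrict_restrict measurableSet_Iio]
  have : Set.Iio u ∩ Set.Ioi 0 = Set.Ioo 0 u := by ext; simp [and_comm]
  rw [this, restrict_Ioo_eq_restrict_Ioc]
  have hi : IntervalIntegrable (fun t : ℝ => t ^ (s - 1)) volume 0 u := intervalIntegral.intervalIntegrable_rpow' (by linarith)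
  rw [← ofReal_integral_eq_lintegral_ofReal hi.1, ← intervalIntegral.integral_of_le hu, integral_rpow (Or.inl (by linarith))]
  · congr 1; simp [Real.zero_rpow hs.ne']
  · filter_upwards [ae_restrict_mem measurableSet_Ioc] with t ht
    exact Real.rpow_nonneg ht.1.le _

lemma inner2 {s u : ℝ} (hs : 0 < s) (hu : 0 < u) :
    ∫⁻ t in Set.Ioi (0:ℝ), (Set.Ici u).indicator (fun t => ENNReal.ofReal (t ^ (-s - 1))) t = ENNReal.ofReal (u ^ (-s) / s) := by
  rw [lintegral_indicator measurableSet_Ici, Measure.restrict_restrict measurableSet_Ici]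
  have : Set.Ici u ∩ Set.Ioi 0 = Set.Ici u := by
    ext x; simp only [Set.mem_inter_iff, Set.mem_Ici, Set.mem_Ioi]
    exact ⟨fun h => h.1, fun h => ⟨h, by linarith⟩⟩
  rw [this, Measure.restrict_congr_set Ioi_ae_eq_Ici.symm]
  have hi := integrableOn_Ioi_rpow_of_lt (a := -s - 1) (by linarith) hu
  rw [← ofReal_integral_eq_lintegral_ofReal hi, integral_Ioi_rpow_of_lt (by linarith) hu]
  · congr 1
    have : -s - 1 + 1 = -s := by ring
    rw [this, neg_div_neg_eq]
  · filter_upwards [ae_restrict_mem measurableSet_Ioi] with t ht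
    exact Real.rpow_nonneg (hu.trans ht).le _

lemma tonelli1 {f : E → ℝ} (hf : Measurable f) (h0 : ∀ x, 0 ≤ f x) {r : ℝ} (hr : 2 < r) :
    ∫⁻ t in Set.Ioi (0:ℝ), ENNReal.ofReal (t ^ (r - 3)) * ∫⁻ x, (if t < f x then ENNReal.ofReal (f x ^ (2:ℝ)) else 0)
      = ENNReal.ofReal (1 / (r - 2)) * ∫⁻ x, ENNReal.ofReal (f x ^ r) := by
  have e : ∀ t : ℝ, ENNReal.ofReal (t ^ (r - 3)) * ∫⁻ x, (if t < f x then ENNReal.ofReal (f x ^ (2:ℝ)) else 0)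
     = ∫⁻ x, ENNReal.ofReal (f x ^ (2:ℝ)) * (Set.Iio (f x)).indicator (fun t => ENNReal.ofReal (t ^ ((r - 2) - 1))) t := by
    intro t
    rw [← lintegral_const_mul' _ _ ENNReal.ofReal_ne_top]
    apply lintegral_congr
    intro x
    simp only [Set.indicator, Set.mem_Iio]
    have : r - 3 = r - 2 - 1 := by ring
    rw [this]
    split_ifs
    · rw [mul_comm]
    · simp
  simp only [e]
  rw [lintegral_lintegral_swap]
  · rw [← lintegral_const_mul' _ _ ENNReal.ofReal_ne_top]
    apply lintegral_congr
    intro x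
    rw [lintegral_const_mul' _ _ ENNReal.ofReal_ne_top, inner1 (by linarith) (h0 x), ← ENNReal.ofReal_mul (by positivity [h0 x]),
      ← ENNReal.ofReal_mul (by apply one_div_nonneg.2; linarith)]
    congr 1
    rcases (h0 x).eq_or_lt with h | h
    · rw [← h, Real.zero_rpow (by norm_num), Real.zero_rpow (by linarith : r ≠ 0)]; simp
    · have : r = 2 + (r - 2) := by ring
      conv_rhs => rw [this, Real.rpow_add h]
      ring
  · apply Measurable.aemeasurable
    apply Measurable.mul
    · fun_prop
    · have : (Function.uncurry fun (t : ℝ) (x : E) => (Set.Iio (f x)).indicator (fun t => ENNReal.ofReal (t ^ ((r - 2) - 1))) t)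
         = fun z : ℝ × E => if z.1 < f z.2 then ENNReal.ofReal (z.1 ^ ((r - 2) - 1)) else 0 := by
        ext z; simp [Function.uncurry, Set.indicator]
      refine (congrArg Measurable this).mpr ?_
      exact Measurable.ite (measurableSet_lt (by fun_prop) (by fun_prop)) (by fun_prop) (by fun_prop)

lemma tonelli2 {f : E → ℝ} (hf : Measurable f) (h0 : ∀ x, 0 ≤ f x) {r b : ℝ} (hr : 0 < r) (hb : r < b) :
    ∫⁻ t in Set.Ioi (0:ℝ), ENNReal.ofReal (t ^ (r - 1 - b)) * ∫⁻ x, (if f x ≤ 2 * t then ENNReal.ofReal (f x ^ b) else 0)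
      = ENNReal.ofReal (2 ^ (b - r) / (b - r)) * ∫⁻ x, ENNReal.ofReal (f x ^ r) := by
  have e : ∀ t : ℝ, ENNReal.ofReal (t ^ (r - 1 - b)) * ∫⁻ x, (if f x ≤ 2 * t then ENNReal.ofReal (f x ^ b) else 0)
     = ∫⁻ x, ENNReal.ofReal (f x ^ b) * (Set.Ici (f x / 2)).indicator (fun t => ENNReal.ofReal (t ^ (-(b - r) - 1))) t := by
    intro t
    rw [← lintegral_const_mul' _ _ ENNReal.ofReal_ne_top]
    apply lintegral_congr
    intro x
    simp only [Set.indicator, Set.mem_Ici]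
    have : r - 1 - b = -(b - r) - 1 := by ring
    rw [this]
    have h2 : f x / 2 ≤ t ↔ f x ≤ 2 * t := by constructor <;> intro h <;> linarith
    simp only [h2]
    split_ifs
    · rw [mul_comm]
    · simp
  simp only [e]
  rw [lintegral_lintegral_swap]
  · rw [← lintegral_const_mul' _ _ ENNReal.ofReal_ne_top]
    apply lintegral_congr
    intro x
    have hbr : 0 < b - r := by linarith
    rw [lintegral_const_mul' _ _ ENNReal.ofReal_ne_top]
    rcases (h0 x).eq_or_lt with h | h
    · rw [← h, Real.zero_rpow (by linarith), Real.zero_rpow (by linarith)]; simp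
    rw [inner2 hbr (by linarith), ← ENNReal.ofReal_mul (by positivity [h0 x]),
      ← ENNReal.ofReal_mul (by positivity)]
    congr 1
    rw [Real.div_rpow h.le (by norm_num), Real.rpow_neg (by norm_num : (0:ℝ) ≤ 2), div_inv_eq_mul]
    have : r = b + -(b - r) := by ring
    conv_rhs => rw [this, Real.rpow_add h]
    have h3 : b - (b + -(b-r)) = b - r := by ring
    rw [h3]
    ring
  · apply Measurable.aemeasurable
    apply Measurable.mul
    · fun_prop
    · have : (Function.uncurry fun (t : ℝ) (x : E) => (Set.Ici (f x / 2)).indicator (fun t => ENNReal.ofReal (t ^ (-(b - r) - 1))) t)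
         = fun z : ℝ × E => if f z.2 / 2 ≤ z.1 then ENNReal.ofReal (z.1 ^ (-(b - r) - 1)) else 0 := by
        ext z; simp [Function.uncurry, Set.indicator]
      refine (congrArg Measurable this).mpr ?_
      exact Measurable.ite (measurableSet_le (by fun_prop) (by fun_prop)) (by fun_prop) (by fun_prop)

/-- real-variable core of Marcinkiewicz interpolation -/
lemma marc {f g : E → ℝ} (hf : Measurable f) (h0 : ∀ x, 0 ≤ f x) (hg : Measurable g) (hg0 : ∀ x, 0 ≤ g x)
    {r b : ℝ} (hr : 2 < r) (hb : r < b) {C1 C2 : ℝ≥0∞} (hC1 : C1 ≠ ∞) (hC2 : C2 ≠ ∞)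
    (H : ∀ t : ℝ, 0 < t → volume {x | t ≤ g x} ≤
      C1 * (ENNReal.ofReal (t ^ (-2:ℝ)) * ∫⁻ x, (if t < f x then ENNReal.ofReal (f x ^ (2:ℝ)) else 0)) +
      C2 * (ENNReal.ofReal (t ^ (-b)) * ∫⁻ x, (if f x ≤ 2 * t then ENNReal.ofReal (f x ^ b) else 0))) :
    ∫⁻ x, ENNReal.ofReal (g x ^ r) ≤
      ENNReal.ofReal r * (C1 * ENNReal.ofReal (1 / (r - 2)) + C2 * ENNReal.ofReal (2 ^ (b - r) / (b - r))) * ∫⁻ x, ENNReal.ofReal (f x ^ r) := by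
  rw [lintegral_rpow_eq_lintegral_meas_le_mul volume (Filter.Eventually.of_forall hg0) hg.aemeasurable (by linarith), mul_assoc]
  refine mul_le_mul_right ?_ _
  rw [add_mul, mul_assoc, mul_assoc, ← tonelli1 hf h0 hr, ← tonelli2 hf h0 (by linarith) hb]
  rw [← lintegral_const_mul' _ _ hC1, ← lintegral_const_mul' _ _ hC2, ← lintegral_add_left]
  · apply setLIntegral_mono' measurableSet_Ioi
    intro t ht
    have ht : 0 < t := ht
    refine (mul_le_mul_left (H t ht) _).trans (le_of_eq ?_)
    have e1 : t ^ (r - 3) = t ^ (-2:ℝ) * t ^ (r - 1) := by rw [← Real.rpow_add ht]; congr 1; ring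
    have e2 : t ^ (r - 1 - b) = t ^ (-b) * t ^ (r - 1) := by rw [← Real.rpow_add ht]; congr 1; ring
    rw [e1, e2, ENNReal.ofReal_mul (by positivity), ENNReal.ofReal_mul (by positivity)]
    ring
  · apply Measurable.const_mul
    apply Measurable.mul (by fun_prop)
    refine Measurable.lintegral_prod_right' (f := fun z : ℝ × E => if z.1 < f z.2 then ENNReal.ofReal (f z.2 ^ (2:ℝ)) else 0) ?_
    refine Measurable.ite (measurableSet_lt (by fun_prop) (by fun_prop)) (by fun_prop) (by fun_prop)

end KMS


namespace KMS
open MeasureTheory FourierTransform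
open scoped ENNReal SchwartzMap NNReal ContDiff

/-- test functions -/
structure Cc (f : E → ℂ) : Prop where
  smooth : ContDiff ℝ ∞ f
  supp : HasCompactSupport f

/-- the multiplier operator -/
noncomputable def T (m f : E → ℂ) : E → ℂ := 𝓕 (fun ξ => m ξ * 𝓕⁻ f ξ)

lemma Cc.cont {f} (h : Cc f) : Continuous f := h.smooth.continuous

lemma schwartz_W (g : 𝓢(E, ℂ)) : W g := by
  refine ⟨g.integrable, ?_⟩
  obtain ⟨C, hC⟩ := g.decay 0 0
  exact ⟨C, fun x => by simpa using hC.2 x⟩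

/-- Schwartz version of the inverse Fourier transform of a test function -/
lemma Cc.exists_schwartz {f} (h : Cc f) : ∃ g : 𝓢(E, ℂ), (g : E → ℂ) = 𝓕⁻ f ∧ 𝓕 (g : E → ℂ) = f := by
  let F : 𝓢(E, ℂ) := h.supp.toSchwartzMap h.smooth
  refine ⟨𝓕⁻ F, ?_, ?_⟩
  · rw [SchwartzMap.fourierInv_coe]; rfl
  · rw [← SchwartzMap.fourier_coe, FourierTransform.fourier_fourierInv_eq]; rfl

lemma Cc.W {f} (h : Cc f) : W f := by
  have := schwartz_W (h.supp.toSchwartzMap h.smooth)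
  exact this

lemma Cc.W_inv {f} (h : Cc f) : KMS.W (𝓕⁻ f) := by
  obtain ⟨g, hg, -⟩ := h.exists_schwartz
  rw [← hg]; exact schwartz_W g

lemma Cc.fourier_inv {f} (h : Cc f) : 𝓕 (𝓕⁻ f) = f := by
  obtain ⟨g, hg, hg'⟩ := h.exists_schwartz
  rw [← hg, hg']

lemma Good.T_bound {r K m f} (hm : Good r K m) (h : Cc f) :
    eLpNorm (T m f) r volume ≤ K * eLpNorm f r volume := by
  have := hm.bound _ h.W_inv
  rwa [h.fourier_inv] at this

/-- bounded measurable -/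
structure BM (m : E → ℂ) : Prop where
  meas : AEStronglyMeasurable m volume
  bdd : ∃ B : ℝ, ∀ ξ, ‖m ξ‖ ≤ B

lemma BM.W {m φ} (hm : BM m) (h : W φ) : KMS.W (fun ξ => m ξ * φ ξ) := by
  obtain ⟨B, hB⟩ := hm.bdd
  exact h.mul hm.meas hB

lemma Good.BM {r K m} (hm : Good r K m) : BM m := ⟨hm.meas, K, hm.bdd⟩

lemma Hom0.BM {m} (hm : Hom0 m) : BM m := (good_hom0 0 hm).choose_spec.BM

lemma T_add {m f g} (hm : BM m) (hf : Cc f) (hg : Cc g) : T m (f + g) = T m f + T m g := by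
  unfold T
  have : 𝓕⁻ (f + g) = 𝓕⁻ f + 𝓕⁻ g := by
    have := VectorFourier.fourierIntegral_add (L := -innerₗ E) (μ := volume)
      Real.continuous_fourierChar (by simp; fun_prop) hf.W.int hg.W.int
    exact this
  rw [← fourier_add_fun (hm.W hf.W_inv).int (hm.W hg.W_inv).int]
  congr 1
  ext ξ
  rw [this, Pi.add_apply, mul_add]

lemma T_cont {m f} (hm : BM m) (hf : Cc f) : Continuous (T m f) := cont_fourier (hm.W hf.W_inv).int

end KMS


namespace KMS
open MeasureTheory FourierTransform
open scoped ENNReal SchwartzMap NNReal ContDiff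

lemma eLpNorm_pow_eq {q : ℝ} (hq : 0 < q) (f : E → ℂ) :
    eLpNorm f (ENNReal.ofReal q) volume ^ q = ∫⁻ x, ENNReal.ofReal (‖f x‖ ^ q) := by
  have h0 : ENNReal.ofReal q ≠ 0 := by simpa using hq
  rw [eLpNorm_eq_lintegral_rpow_enorm_toReal h0 ENNReal.ofReal_ne_top, ENNReal.toReal_ofReal hq.le,
    ← ENNReal.rpow_mul, one_div, inv_mul_cancel₀ hq.ne', ENNReal.rpow_one]
  apply lintegral_congr
  intro x
  rw [← ENNReal.ofReal_rpow_of_nonneg (norm_nonneg _) hq.le, ofReal_norm]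

lemma cheb {q : ℝ} (hq : 0 < q) {f g : E → ℂ} (hg : Continuous g) {K : ℝ≥0∞}
    (H : eLpNorm g (ENNReal.ofReal q) volume ≤ K * eLpNorm f (ENNReal.ofReal q) volume) {t : ℝ} (ht : 0 < t) :
    volume {x | t ≤ ‖g x‖} ≤ K ^ q * (ENNReal.ofReal (t ^ (-q)) * ∫⁻ x, ENNReal.ofReal (‖f x‖ ^ q)) := by
  have h0 : ENNReal.ofReal q ≠ 0 := by simpa using hq
  have h := mul_meas_ge_le_pow_eLpNorm' volume h0 ENNReal.ofReal_ne_top hg.aestronglyMeasurable (ENNReal.ofReal t)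
  rw [ENNReal.toReal_ofReal hq.le] at h
  have e : {x | ENNReal.ofReal t ≤ ‖g x‖ₑ} = {x | t ≤ ‖g x‖} := by
    ext x
    simp only [Set.mem_setOf_eq]
    rw [← ofReal_norm, ENNReal.ofReal_le_ofReal_iff (norm_nonneg _)]
  rw [e] at h
  have h2 := h.trans (ENNReal.rpow_le_rpow H hq.le)
  rw [ENNReal.mul_rpow_of_nonneg _ _ hq.le, eLpNorm_pow_eq hq, ENNReal.ofReal_rpow_of_pos ht] at h2
  have e3 : ENNReal.ofReal (t ^ (-q)) * ENNReal.ofReal (t ^ q) = 1 := by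
    rw [← ENNReal.ofReal_mul (by positivity), ← Real.rpow_add ht]; simp
  calc volume {x | t ≤ ‖g x‖} = ENNReal.ofReal (t ^ (-q)) * (ENNReal.ofReal (t ^ q) * volume {x | t ≤ ‖g x‖}) := by
        rw [← mul_assoc, e3, one_mul]
    _ ≤ ENNReal.ofReal (t ^ (-q)) * (K ^ q * ∫⁻ x, ENNReal.ofReal (‖f x‖ ^ q)) := by gcongr
    _ = _ := by ring

lemma Cc.mul_left {f : E → ℂ} (h : Cc f) {χ : E → ℂ} (hχ : ContDiff ℝ ∞ χ) : Cc (fun x => χ x * f x) :=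
  ⟨hχ.mul h.smooth, h.supp.mul_left⟩

lemma Cc.split {f : E → ℂ} (h : Cc f) {t : ℝ} (ht : 0 < t) : ∃ f1 f2 : E → ℂ, Cc f1 ∧ Cc f2 ∧ f = f1 + f2 ∧
    (∀ x, ‖f1 x‖ ≤ if t < ‖f x‖ then ‖f x‖ else 0) ∧ (∀ x, ‖f2 x‖ ≤ if ‖f x‖ ≤ 2 * t then ‖f x‖ else 0) := by
  let s : E → ℝ := fun x => Real.smoothTransition (2 - ‖f x‖ ^ 2 / t ^ 2)
  have hs : ContDiff ℝ ∞ s := by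
    have : ContDiff ℝ ∞ (fun x => ‖f x‖ ^ 2) := h.smooth.norm_sq ℝ
    exact Real.smoothTransition.contDiff.comp (contDiff_const.sub (this.div_const _))
  have hs0 : ∀ x, 0 ≤ s x := fun x => Real.smoothTransition.nonneg _
  have hs1 : ∀ x, s x ≤ 1 := fun x => Real.smoothTransition.le_one _
  have hsC : ContDiff ℝ ∞ (fun x => (s x : ℂ)) := Complex.ofRealCLM.contDiff.comp hs
  refine ⟨fun x => (1 - (s x : ℂ)) * f x, fun x => (s x : ℂ) * f x, h.mul_left (contDiff_const.sub hsC), h.mul_left hsC, ?_, ?_, ?_⟩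
  · ext x; simp only [Pi.add_apply]; ring
  · intro x
    have e : ‖1 - (s x : ℂ)‖ = 1 - s x := by
      rw [← Complex.ofReal_one, ← Complex.ofReal_sub, Complex.norm_real, Real.norm_of_nonneg (by linarith [hs1 x])]
    rw [norm_mul, e]
    split_ifs with hx
    · nlinarith [hs0 x, norm_nonneg (f x)]
    · have : s x = 1 := by
        apply Real.smoothTransition.one_of_one_le
        have : ‖f x‖ ^ 2 / t ^ 2 ≤ 1 := by
          rw [div_le_one (by positivity)]
          exact pow_le_pow_left₀ (norm_nonneg _) (not_lt.1 hx) 2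
        linarith
      rw [this]; simp
  · intro x
    rw [norm_mul, Complex.norm_real, Real.norm_of_nonneg (hs0 x)]
    split_ifs with hx
    · nlinarith [hs1 x, norm_nonneg (f x)]
    · have : s x = 0 := by
        apply Real.smoothTransition.zero_of_nonpos
        have : 2 ≤ ‖f x‖ ^ 2 / t ^ 2 := by
          rw [le_div_iff₀ (by positivity)]
          have := not_le.1 hx
          nlinarith
        linarith
      rw [this]; simp

lemma T_marc {m : E → ℂ} (hm : BM m) {r b : ℝ} (hr : 2 < r) (hb : r < b) {K1 K2 : ℝ≥0}
    (h1 : Good (ENNReal.ofReal 2) K1 m) (h2 : Good (ENNReal.ofReal b) K2 m) :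
    ∃ C : ℝ≥0, ∀ f, Cc f → eLpNorm (T m f) (ENNReal.ofReal r) volume ≤ C * eLpNorm f (ENNReal.ofReal r) volume := by
  have hr0 : 0 < r := by linarith
  have hb0 : 0 < b := by linarith
  set C1 : ℝ≥0∞ := (K1:ℝ≥0∞) ^ (2:ℝ) * ENNReal.ofReal (2 ^ (2:ℝ)) with hC1
  set C2 : ℝ≥0∞ := (K2:ℝ≥0∞) ^ b * ENNReal.ofReal (2 ^ b) with hC2
  have hC1t : C1 ≠ ⊤ := ENNReal.mul_ne_top (ENNReal.rpow_ne_top_of_nonneg (by norm_num) ENNReal.coe_ne_top) ENNReal.ofReal_ne_top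
  have hC2t : C2 ≠ ⊤ := ENNReal.mul_ne_top (ENNReal.rpow_ne_top_of_nonneg hb0.le ENNReal.coe_ne_top) ENNReal.ofReal_ne_top
  set D : ℝ≥0∞ := ENNReal.ofReal r * (C1 * ENNReal.ofReal (1 / (r - 2)) + C2 * ENNReal.ofReal (2 ^ (b - r) / (b - r))) with hD
  have hDt : D ≠ ⊤ := ENNReal.mul_ne_top ENNReal.ofReal_ne_top (ENNReal.add_ne_top.2
    ⟨ENNReal.mul_ne_top hC1t ENNReal.ofReal_ne_top, ENNReal.mul_ne_top hC2t ENNReal.ofReal_ne_top⟩)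
  have hDr : D ^ (1 / r) ≠ ⊤ := ENNReal.rpow_ne_top_of_nonneg (by positivity) hDt
  refine ⟨(D ^ (1 / r)).toNNReal, fun f hf => ?_⟩
  rw [ENNReal.coe_toNNReal hDr]
  have key : ∫⁻ x, ENNReal.ofReal (‖T m f x‖ ^ r) ≤ D * ∫⁻ x, ENNReal.ofReal (‖f x‖ ^ r) := by
    refine marc (f := fun x => ‖f x‖) (g := fun x => ‖T m f x‖) hf.cont.norm.measurable (fun _ => norm_nonneg _)
      (T_cont hm hf).norm.measurable (fun _ => norm_nonneg _) hr hb hC1t hC2t ?_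
    intro t ht
    obtain ⟨f1, f2, hf1, hf2, hadd, hb1, hb2⟩ := hf.split ht
    have hT : T m f = T m f1 + T m f2 := by rw [hadd, T_add hm hf1 hf2]
    have sub : {x | t ≤ ‖T m f x‖} ⊆ {x | t / 2 ≤ ‖T m f1 x‖} ∪ {x | t / 2 ≤ ‖T m f2 x‖} := by
      intro x hx
      simp only [Set.mem_setOf_eq, Set.mem_union] at hx ⊢
      rw [hT] at hx
      by_contra! hc
      have := norm_add_le (T m f1 x) (T m f2 x)
      simp only [Pi.add_apply] at hx
      linarith
    have ht2 : 0 < t / 2 := by linarith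
    refine (measure_mono sub).trans ((measure_union_le _ _).trans (add_le_add ?_ ?_))
    · refine (cheb (by norm_num) (T_cont hm hf1) (h1.T_bound hf1) ht2).trans ?_
      rw [hC1, mul_assoc ((K1:ℝ≥0∞) ^ (2:ℝ)), ← mul_assoc (ENNReal.ofReal (2 ^ (2:ℝ))), ← ENNReal.ofReal_mul (by positivity)]
      have e : (t / 2) ^ (-2:ℝ) = 2 ^ (2:ℝ) * t ^ (-2:ℝ) := by
        rw [Real.div_rpow ht.le (by norm_num), Real.rpow_neg (by norm_num : (0:ℝ) ≤ 2), div_inv_eq_mul, mul_comm]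
      rw [e]
      gcongr with x
      split_ifs with hx
      · have := hb1 x
        rw [if_pos hx] at this
        gcongr
      · have := hb1 x
        rw [if_neg hx] at this
        have h0 : ‖f1 x‖ = 0 := le_antisymm this (norm_nonneg _)
        rw [h0, Real.zero_rpow (by norm_num)]; simp
    · refine (cheb hb0 (T_cont hm hf2) (h2.T_bound hf2) ht2).trans ?_
      rw [hC2, mul_assoc ((K2:ℝ≥0∞) ^ b), ← mul_assoc (ENNReal.ofReal (2 ^ b)), ← ENNReal.ofReal_mul (by positivity)]
      have e : (t / 2) ^ (-b) = 2 ^ b * t ^ (-b) := by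
        rw [Real.div_rpow ht.le (by norm_num), Real.rpow_neg (by norm_num : (0:ℝ) ≤ 2), div_inv_eq_mul, mul_comm]
      rw [e]
      gcongr with x
      split_ifs with hx
      · have := hb2 x
        rw [if_pos hx] at this
        gcongr
      · have := hb2 x
        rw [if_neg hx] at this
        have h0 : ‖f2 x‖ = 0 := le_antisymm this (norm_nonneg _)
        rw [h0, Real.zero_rpow hb0.ne']; simp
  rw [← eLpNorm_pow_eq hr0, ← eLpNorm_pow_eq hr0] at key
  rw [← ENNReal.rpow_le_rpow_iff hr0, ENNReal.mul_rpow_of_nonneg _ _ hr0.le, ← ENNReal.rpow_mul, one_div, inv_mul_cancel₀ hr0.ne', ENNReal.rpow_one]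
  exact key

lemma T_ge_two {m : E → ℂ} (hm : Hom0 m) {r : ℝ} (hr : 2 ≤ r) :
    ∃ C : ℝ≥0, ∀ f, Cc f → eLpNorm (T m f) (ENNReal.ofReal r) volume ≤ C * eLpNorm f (ENNReal.ofReal r) volume := by
  obtain ⟨K1, h1⟩ := good_hom0 0 hm
  have e2 : (2 : ℝ≥0∞) ^ (0 + 1) = ENNReal.ofReal 2 := by simp
  rw [e2] at h1
  rcases hr.eq_or_lt with rfl | hr
  · exact ⟨K1, fun f hf => h1.T_bound hf⟩
  obtain ⟨k, hk⟩ := pow_unbounded_of_one_lt r (one_lt_two)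
  obtain ⟨K2, h2⟩ := good_hom0 k hm
  have e3 : (2 : ℝ≥0∞) ^ (k + 1) = ENNReal.ofReal (2 ^ (k + 1)) := by
    rw [ENNReal.ofReal_pow (by norm_num)]; simp
  rw [e3] at h2
  exact T_marc hm.BM hr (hk.trans (pow_lt_pow_right₀ one_lt_two (by omega))) h1 h2

end KMS


namespace KMS
open MeasureTheory FourierTransform
open scoped ENNReal SchwartzMap NNReal ContDiff

lemma moments {m f : E → ℂ} (hm : BM m) (hf : Cc f) (n : ℕ) :
    Integrable (fun v => ‖v‖ ^ n * ‖m v * 𝓕⁻ f v‖) := by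
  obtain ⟨g, hg, -⟩ := hf.exists_schwartz
  obtain ⟨B, hB⟩ := hm.bdd
  have h1 := g.integrable_pow_mul volume n
  rw [hg] at h1
  have := h1.bdd_mul (f := fun v => ‖m v‖) (c := B) hm.meas.norm (Filter.Eventually.of_forall (fun v => by simpa using hB v))
  refine this.congr (Filter.Eventually.of_forall fun v => ?_)
  simp only [norm_mul]; ring

lemma T_smooth {m f : E → ℂ} (hm : BM m) (hf : Cc f) : ContDiff ℝ ∞ (T m f) :=
  Real.contDiff_fourier (N := ⊤) (fun n _ => moments hm hf n)

lemma Hom0.neg {m : E → ℂ} (hm : Hom0 m) : Hom0 (fun ξ => m (-ξ)) := by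
  refine ⟨?_, fun t ht ξ => ?_⟩
  · refine hm.smooth.comp contDiff_neg.contDiffOn ?_
    intro x hx; simpa using hx
  · rw [← smul_neg, hm.hom t ht]

lemma T_dual {m f h : E → ℂ} (hm : BM m) (hm' : BM (fun ξ => m (-ξ))) (hf : Cc f) (hh : Cc h) :
    ∫ x, T m f x * h x = ∫ x, T (fun ξ => m (-ξ)) h x * f x := by
  unfold T
  rw [fourier_selfadj (hm.W hf.W_inv).int hh.W.int, fourier_selfadj (hm'.W hh.W_inv).int hf.W.int,
    ← integral_neg_eq_self]
  congr 1
  ext ξ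
  rw [Real.fourierInv_eq_fourier_neg, Real.fourierInv_eq_fourier_neg, neg_neg]
  ring

lemma holder {r r' : ℝ} (h : r.HolderConjugate r') {f g : E → ℂ} (hf : Continuous f) (hg : Continuous g) :
    ‖∫ x, g x * f x‖ₑ ≤ eLpNorm g (ENNReal.ofReal r') volume * eLpNorm f (ENNReal.ofReal r) volume := by
  have : ENNReal.HolderTriple (ENNReal.ofReal r') (ENNReal.ofReal r) 1 := h.symm.ennrealOfReal
  refine (enorm_integral_le_lintegral_enorm _).trans ?_
  rw [← eLpNorm_one_eq_lintegral_enorm]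
  have h' := eLpNorm_smul_le_mul_eLpNorm (μ := (volume : Measure E)) (p := ENNReal.ofReal r') (q := ENNReal.ofReal r) (r := 1) hf.aestronglyMeasurable hg.aestronglyMeasurable
  exact h'

lemma pt_ineq {r r' : ℝ} (h : r.HolderConjugate r') (hr2 : r < 2) {c a e : ℝ} (hc0 : 0 ≤ c) (hc1 : c ≤ 1) (ha : 0 ≤ a) (he : 0 < e) :
    (c * (a * (a ^ 2 + e) ^ ((r - 2) / 2))) ^ r' ≤ c * (a ^ 2 * (a ^ 2 + e) ^ ((r - 2) / 2)) := by
  have hr' : 0 < r' := h.symm.pos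
  have hr'1 : 1 < r' := h.symm.lt
  have hrr : r * r' = r + r' := h.mul_eq_add
  have hr'2 : 2 ≤ r' := by nlinarith [h.lt]
  set s := a ^ 2 + e with hs
  have hspos : 0 < s := by positivity
  rw [Real.mul_rpow hc0 (by positivity), Real.mul_rpow ha (by positivity), ← Real.rpow_mul hspos.le]
  have h1 : c ^ r' ≤ c := by
    calc c ^ r' ≤ c ^ (1:ℝ) := Real.rpow_le_rpow_of_exponent_ge_of_imp hc0 hc1 hr'1.le (by intro _ h; linarith)
      _ = c := Real.rpow_one c
  have h2 : a ^ r' = a ^ 2 * a ^ (r' - 2) := by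
    rcases ha.eq_or_lt with h | h
    · rw [← h, Real.zero_rpow hr'.ne']; simp
    · rw [← Real.rpow_natCast a 2, ← Real.rpow_add h]; congr 1; push_cast; ring
  have h3 : a ^ (r' - 2) ≤ s ^ ((r' - 2) / 2) := by
    calc a ^ (r' - 2) = (a ^ 2) ^ ((r' - 2) / 2) := by
          rw [← Real.rpow_natCast a 2, ← Real.rpow_mul ha]; congr 1; push_cast; ring
      _ ≤ _ := Real.rpow_le_rpow (by positivity) (by linarith) (by linarith)
  have h4 : s ^ ((r' - 2) / 2) * s ^ ((r - 2) / 2 * r') = s ^ ((r - 2) / 2) := by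
    rw [← Real.rpow_add hspos]; congr 1; nlinarith
  calc c ^ r' * (a ^ r' * s ^ ((r - 2) / 2 * r')) ≤ c * (a ^ 2 * s ^ ((r' - 2) / 2) * s ^ ((r - 2) / 2 * r')) := by
        rw [h2]; gcongr
    _ = _ := by rw [mul_assoc (a ^ 2), h4]

/-- cutoffs -/
noncomputable def bump (n : ℕ) : ContDiffBump (0 : E) := ⟨n + 1, n + 2, by positivity, by linarith⟩

lemma absorb {X K : ℝ≥0∞} {r r' : ℝ} (h : r.HolderConjugate r') (hX : X ≠ ⊤) (H : X ≤ K * X ^ (1 / r')) : X ≤ K ^ r := by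
  by_cases h0 : X = 0
  · simp [h0]
  have hr := h.pos
  have e : X = X ^ (1 / r) * X ^ (1 / r') := by
    rw [← ENNReal.rpow_add _ _ h0 hX, one_div, one_div, h.inv_add_inv_eq_one, ENNReal.rpow_one]
  have hp0 : X ^ (1 / r') ≠ 0 := by simp [h0, hX]
  have hpt : X ^ (1 / r') ≠ ⊤ := ENNReal.rpow_ne_top_of_nonneg (one_div_nonneg.2 h.symm.nonneg) hX
  have : X ^ (1 / r) ≤ K := by
    rw [e] at H
    conv at H => lhs; rw [← e]
    have H2 : X ^ (1 / r) * X ^ (1 / r') ≤ K * X ^ (1 / r') := by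
      rw [← e]
      conv at H => rhs; rw [← e]
      exact H
    exact (ENNReal.mul_le_mul_iff_left hp0 hpt).1 H2
  have := ENNReal.rpow_le_rpow this hr.le
  rwa [← ENNReal.rpow_mul, one_div, inv_mul_cancel₀ hr.ne', ENNReal.rpow_one] at this

lemma T_lt_two {m : E → ℂ} (hm : Hom0 m) {r : ℝ} (hr1 : 1 < r) (hr : r < 2) :
    ∃ C : ℝ≥0, ∀ f, Cc f → eLpNorm (T m f) (ENNReal.ofReal r) volume ≤ C * eLpNorm f (ENNReal.ofReal r) volume := by
  obtain ⟨r', h⟩ : ∃ r', r.HolderConjugate r' := ⟨_, Real.HolderConjugate.conjExponent hr1⟩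
  have hr'2 : 2 ≤ r' := by nlinarith [h.lt, h.symm.lt, h.mul_eq_add]
  have hr0 : 0 < r := h.pos
  have hr'0 : 0 < r' := h.symm.pos
  obtain ⟨C, hC⟩ := T_ge_two hm.neg hr'2
  refine ⟨C, fun f hf => ?_⟩
  set g := T m f with hg
  have hgs : ContDiff ℝ ∞ g := T_smooth hm.BM hf
  -- the smooth weight
  have main : ∀ n : ℕ, ∫⁻ x, ENNReal.ofReal (bump n x * (‖g x‖ ^ 2 * (‖g x‖ ^ 2 + 1 / ((n : ℝ) + 1)) ^ ((r - 2) / 2)))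
      ≤ (C * eLpNorm f (ENNReal.ofReal r) volume) ^ r := by
    intro n
    set e : ℝ := 1 / ((n : ℝ) + 1) with he
    have hepos : 0 < e := by positivity
    set w : E → ℝ := fun x => bump n x * (‖g x‖ ^ 2 + e) ^ ((r - 2) / 2) with hw
    have hws : ContDiff ℝ ∞ w := by
      refine (bump n).contDiff.mul ?_
      refine ContDiff.rpow_const_of_ne ((hgs.norm_sq ℝ).add contDiff_const) ?_
      intro x; positivity
    have hwc : HasCompactSupport w := (bump n).hasCompactSupport.mul_right
    have hw0 : ∀ x, 0 ≤ w x := fun x => mul_nonneg (bump n).nonneg (by positivity)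
    have hh : Cc (fun x => (w x : ℂ) * (starRingEnd ℂ) (g x)) := by
      constructor
      · exact (Complex.ofRealCLM.contDiff.comp hws).mul (Complex.conjCLE.contDiff.comp hgs)
      · exact (hwc.comp_left (g := fun x : ℝ => (x:ℂ)) (by simp)).mul_right
    set hfun : E → ℂ := fun x => (w x : ℂ) * (starRingEnd ℂ) (g x) with hhf
    have hgh : ∀ x, g x * hfun x = ((w x * ‖g x‖ ^ 2 : ℝ) : ℂ) := by
      intro x
      simp only [hhf]
      rw [mul_left_comm, Complex.mul_conj, Complex.normSq_eq_norm_sq]; push_cast; ring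
    have h_int : Integrable (fun x => w x * ‖g x‖ ^ 2) := by
      refine Continuous.integrable_of_hasCompactSupport ?_ hwc.mul_right
      exact hws.continuous.mul (hgs.continuous.norm.pow 2)
    have d := T_dual hm.BM hm.neg.BM hf hh
    rw [← hg] at d
    have d1 : ∫ x, g x * hfun x = ((∫ x, w x * ‖g x‖ ^ 2 : ℝ) : ℂ) := by
      simp only [hgh]; exact integral_ofReal
    have hX : ‖∫ x, g x * hfun x‖ₑ = ∫⁻ x, ENNReal.ofReal (w x * ‖g x‖ ^ 2) := by
      rw [d1, ← ofReal_norm, Complex.norm_real, Real.norm_of_nonneg (integral_nonneg fun x => mul_nonneg (hw0 x) (by positivity)),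
        ofReal_integral_eq_lintegral_ofReal h_int (Filter.Eventually.of_forall fun x => mul_nonneg (hw0 x) (by positivity))]
    have e0 : ∀ x, bump n x * (‖g x‖ ^ 2 * (‖g x‖ ^ 2 + e) ^ ((r - 2) / 2)) = w x * ‖g x‖ ^ 2 := by
      intro x; simp only [hw]; ring
    simp only [e0]
    set X := ∫⁻ x, ENNReal.ofReal (w x * ‖g x‖ ^ 2) with hXd
    have hXt : X ≠ ⊤ := by rw [← hX]; simp
    apply absorb h hXt
    rw [← hX, d]
    refine (holder h hf.cont (T_cont hm.neg.BM hh)).trans ?_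
    rw [mul_assoc, mul_comm (eLpNorm f _ _), ← mul_assoc]
    gcongr
    refine (hC _ hh).trans ?_
    gcongr
    have : eLpNorm hfun (ENNReal.ofReal r') volume ^ r' ≤ X := by
      rw [eLpNorm_pow_eq hr'0]
      apply lintegral_mono
      intro x
      apply ENNReal.ofReal_le_ofReal
      have e1 : ‖hfun x‖ = bump n x * (‖g x‖ * (‖g x‖ ^ 2 + e) ^ ((r - 2) / 2)) := by
        simp only [hhf]
        rw [norm_mul, Complex.norm_real, Real.norm_of_nonneg (hw0 x), RCLike.norm_conj]
        simp only [hw]; ring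
      rw [e1, ← e0]
      exact pt_ineq h hr (bump n).nonneg (bump n).le_one (norm_nonneg _) hepos
    have := ENNReal.rpow_le_rpow this (one_div_nonneg.2 hr'0.le)
    rw [← ENNReal.rpow_mul, one_div, mul_inv_cancel₀ hr'0.ne', ENNReal.rpow_one, ← one_div] at this
    rw [← hX, d] at this
    exact this
  rw [← ENNReal.rpow_le_rpow_iff hr0, eLpNorm_pow_eq hr0]
  have lim : ∀ x, Filter.Tendsto (fun n : ℕ => ENNReal.ofReal (bump n x * (‖g x‖ ^ 2 * (‖g x‖ ^ 2 + 1 / ((n : ℝ) + 1)) ^ ((r - 2) / 2)))) Filter.atTop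
      (nhds (ENNReal.ofReal (‖g x‖ ^ r))) := by
    intro x
    apply (ENNReal.continuous_ofReal.tendsto _).comp
    have hb : Filter.Tendsto (fun n : ℕ => bump n x) Filter.atTop (nhds 1) := by
      apply tendsto_const_nhds.congr'
      obtain ⟨N, hN⟩ := exists_nat_ge ‖x‖
      filter_upwards [Filter.eventually_ge_atTop N] with n hn
      symm
      apply (bump n).one_of_mem_closedBall
      rw [mem_closedBall_zero_iff]
      have : (N:ℝ) ≤ n := by exact_mod_cast hn
      show ‖x‖ ≤ (n:ℝ) + 1
      linarith
    rcases (norm_nonneg (g x)).eq_or_lt with h0 | h0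
    · rw [← h0, Real.zero_rpow hr0.ne']; simp
    have h1 : Filter.Tendsto (fun n : ℕ => (‖g x‖ ^ 2 + 1 / ((n : ℝ) + 1)) ^ ((r - 2) / 2)) Filter.atTop (nhds ((‖g x‖ ^ 2) ^ ((r - 2) / 2))) := by
      have : Filter.Tendsto (fun n : ℕ => (‖g x‖ ^ 2 + 1 / ((n : ℝ) + 1))) Filter.atTop (nhds (‖g x‖ ^ 2 + 0)) :=
        tendsto_const_nhds.add tendsto_one_div_add_atTop_nhds_zero_nat
      rw [add_zero] at this
      exact this.rpow_const (Or.inl (by positivity))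
    have h2 := hb.mul (h1.const_mul (‖g x‖ ^ 2))
    convert h2 using 2
    rw [one_mul, ← Real.rpow_natCast, ← Real.rpow_mul h0.le, ← Real.rpow_add h0]
    congr 1; push_cast; ring
  calc ∫⁻ x, ENNReal.ofReal (‖g x‖ ^ r) = ∫⁻ x, Filter.liminf (fun n : ℕ => ENNReal.ofReal (bump n x * (‖g x‖ ^ 2 * (‖g x‖ ^ 2 + 1 / ((n : ℝ) + 1)) ^ ((r - 2) / 2)))) Filter.atTop := by
        apply lintegral_congr; intro x; exact (lim x).liminf_eq.symm
    _ ≤ Filter.liminf (fun n : ℕ => ∫⁻ x, ENNReal.ofReal (bump n x * (‖g x‖ ^ 2 * (‖g x‖ ^ 2 + 1 / ((n : ℝ) + 1)) ^ ((r - 2) / 2)))) Filter.atTop := by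
        apply lintegral_liminf_le
        intro n
        have := hgs.continuous
        have hb := (bump n).continuous
        fun_prop
    _ ≤ _ := by
        refine (Filter.liminf_le_liminf (Filter.Eventually.of_forall main)).trans ?_
        simp

theorem T_Lp {m : E → ℂ} (hm : Hom0 m) {r : ℝ} (hr1 : 1 < r) :
    ∃ C : ℝ≥0, ∀ f, Cc f → eLpNorm (T m f) (ENNReal.ofReal r) volume ≤ C * eLpNorm f (ENNReal.ofReal r) volume := by
  rcases lt_or_ge r 2 with h | h
  · exact T_lt_two hm hr1 h
  · exact T_ge_two hm h

end KMS


namespace KMS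
open MeasureTheory FourierTransform
open scoped ENNReal SchwartzMap NNReal ContDiff

lemma gns {p : ℝ} (hp1 : 1 < p) (hp3 : p < 3) : ∃ C : ℝ≥0, ∀ w : E → ℂ, ContDiff ℝ ∞ w →
    eLpNorm w (ENNReal.ofReal p) volume ≠ ⊤ →
    eLpNorm w (ENNReal.ofReal (3 * p / (3 - p))) volume ≤ C * eLpNorm (fderiv ℝ w) (ENNReal.ofReal p) volume := by
  have hps : 0 < 3 * p / (3 - p) := div_pos (by linarith) (by linarith)
  obtain ⟨CS, hCS⟩ : ∃ C : ℝ≥0, ∀ u : E → ℂ, ContDiff ℝ 1 u → HasCompactSupport u →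
      eLpNorm u (ENNReal.ofReal (3 * p / (3 - p))) volume ≤ C * eLpNorm (fderiv ℝ u) (ENNReal.ofReal p) volume := by
    refine ⟨SNormLESNormFDerivOfEqConst ℂ (volume : Measure E) p.toNNReal, fun u hu h2u => ?_⟩
    · refine eLpNorm_le_eLpNorm_fderiv_of_eq (p := p.toNNReal) (p' := (3 * p / (3 - p)).toNNReal) volume hu h2u ?_ ?_ ?_
      · rw [← NNReal.coe_le_coe, Real.coe_toNNReal _ (by linarith)]; simpa using hp1.le
      · simp
      · rw [Real.coe_toNNReal _ hps.le, NNReal.coe_inv, Real.coe_toNNReal _ (by linarith)]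
        simp only [finrank_euclideanSpace, Fintype.card_fin]
        have : 3 - p ≠ 0 := by linarith
        have : p ≠ 0 := by linarith
        push_cast
        field_simp
  refine ⟨CS, fun w hw hwp => ?_⟩
  -- bound for the derivative of the bump
  obtain ⟨B, hB⟩ : ∃ B : ℝ, ∀ x, ‖fderiv ℝ (bump 0 : E → ℝ) x‖ ≤ B := by
    have h1 : HasCompactSupport (fderiv ℝ (bump 0 : E → ℝ)) := (bump 0).hasCompactSupport.fderiv ℝ
    exact ((bump 0).contDiff (n := 1).continuous_fderiv (by norm_num)).bounded_above_of_compact_support h1 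
  have hB0 : 0 ≤ B := (norm_nonneg _).trans (hB 0)
  set χ : ℕ → E → ℝ := fun n x => bump 0 (((n : ℝ) + 1)⁻¹ • x) with hχ
  have hχs : ∀ n, ContDiff ℝ ∞ (χ n) := fun n => (bump 0).contDiff.comp (contDiff_const_smul _)
  have hχd : ∀ n x, ‖fderiv ℝ (χ n) x‖ ≤ B * ((n : ℝ) + 1)⁻¹ := by
    intro n x
    have h1 : HasFDerivAt (χ n) ((fderiv ℝ (bump 0 : E → ℝ) (((n : ℝ) + 1)⁻¹ • x)).comp (((n : ℝ) + 1)⁻¹ • ContinuousLinearMap.id ℝ E)) x := by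
      have ha : HasFDerivAt (bump 0 : E → ℝ) (fderiv ℝ (bump 0 : E → ℝ) (((n : ℝ) + 1)⁻¹ • x)) (((n : ℝ) + 1)⁻¹ • x) :=
        (((bump 0).contDiff (n := 1)).differentiable (by norm_num) _).hasFDerivAt
      have hb : HasFDerivAt (fun y : E => ((n : ℝ) + 1)⁻¹ • y) (((n : ℝ) + 1)⁻¹ • ContinuousLinearMap.id ℝ E) x :=
        (((n : ℝ) + 1)⁻¹ • ContinuousLinearMap.id ℝ E).hasFDerivAt
      exact HasFDerivAt.comp (g := (bump 0 : E → ℝ)) (f := fun y : E => ((n : ℝ) + 1)⁻¹ • y) x ha hb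
    rw [h1.fderiv]
    refine (ContinuousLinearMap.opNorm_comp_le _ _).trans ?_
    have : ‖((n : ℝ) + 1)⁻¹ • ContinuousLinearMap.id ℝ E‖ ≤ ((n : ℝ) + 1)⁻¹ := by
      rw [norm_smul, Real.norm_of_nonneg (by positivity)]
      exact mul_le_of_le_one_right (by positivity) ContinuousLinearMap.norm_id_le
    exact mul_le_mul (hB _) this (norm_nonneg _) hB0
  set u : ℕ → E → ℂ := fun n x => χ n x • w x with hu
  have hus : ∀ n, ContDiff ℝ 1 (u n) := fun n => ((hχs n).smul hw).of_le (by norm_cast)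
  have huc : ∀ n, HasCompactSupport (u n) := by
    intro n
    have h1 : HasCompactSupport (χ n) := by
      have := (bump 0 : ContDiffBump (0:E)).hasCompactSupport.comp_homeomorph (Homeomorph.smulOfNeZero (((n : ℝ) + 1)⁻¹) (by positivity))
      exact this
    exact h1.smul_right
  have hfd : ∀ n, eLpNorm (fderiv ℝ (u n)) (ENNReal.ofReal p) volume ≤ eLpNorm (fderiv ℝ w) (ENNReal.ofReal p) volume
      + ENNReal.ofReal (B * ((n : ℝ) + 1)⁻¹) * eLpNorm w (ENNReal.ofReal p) volume := by
    intro n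
    have hpt : ∀ x, ‖fderiv ℝ (u n) x‖ ≤ ‖(‖fderiv ℝ w x‖ + ‖(B * ((n : ℝ) + 1)⁻¹) • ‖w x‖‖ : ℝ)‖ := by
      intro x
      have hd1 : DifferentiableAt ℝ (χ n) x := (hχs n).differentiable (by simp) x
      have hd2 : DifferentiableAt ℝ w x := hw.differentiable (by simp) x
      have : fderiv ℝ (u n) x = χ n x • fderiv ℝ w x + (fderiv ℝ (χ n) x).smulRight (w x) := fderiv_fun_smul hd1 hd2
      rw [this]
      refine (norm_add_le _ _).trans ?_
      rw [Real.norm_of_nonneg (by positivity)]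
      rw [norm_smul, ContinuousLinearMap.norm_smulRight_apply, Real.norm_of_nonneg (bump 0).nonneg, smul_eq_mul,
        Real.norm_of_nonneg (by positivity)]
      refine add_le_add (mul_le_of_le_one_left (norm_nonneg _) (bump 0).le_one) ?_
      exact mul_le_mul_of_nonneg_right (hχd n x) (norm_nonneg _)
    refine (eLpNorm_mono hpt).trans ?_
    have hcw : Continuous (fderiv ℝ w) := hw.continuous_fderiv (by simp)
    have hcw2 := hw.continuous
    refine (eLpNorm_add_le (f := fun x => ‖fderiv ℝ w x‖) (g := fun x => ‖(B * ((n : ℝ) + 1)⁻¹) • ‖w x‖‖) (hcw.norm.aestronglyMeasurable) (Continuous.aestronglyMeasurable (by fun_prop)) (by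
      rw [ENNReal.one_le_ofReal]; exact hp1.le)).trans ?_
    rw [eLpNorm_norm, eLpNorm_norm]
    gcongr
    have := eLpNorm_const_smul (B * ((n : ℝ) + 1)⁻¹) (fun x => ‖w x‖) (ENNReal.ofReal p) (volume : Measure E)
    refine (le_of_eq this).trans ?_
    rw [eLpNorm_norm, ← ofReal_norm, Real.norm_of_nonneg (by positivity)]
  have lim : ∀ x, Filter.Tendsto (fun n => u n x) Filter.atTop (nhds (w x)) := by
    intro x
    apply tendsto_const_nhds.congr'
    obtain ⟨N, hN⟩ := exists_nat_ge ‖x‖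
    filter_upwards [Filter.eventually_ge_atTop N] with n hn
    have : χ n x = 1 := by
      apply (bump 0).one_of_mem_closedBall
      rw [mem_closedBall_zero_iff, norm_smul, Real.norm_of_nonneg (by positivity)]
      have : (N:ℝ) ≤ n := by exact_mod_cast hn
      show _ ≤ ((0:ℕ):ℝ) + 1
      rw [inv_mul_le_iff₀ (by positivity)]
      simp; linarith
    simp only [hu, this, one_smul]
  refine (Lp.eLpNorm_lim_le_liminf_eLpNorm (fun n => (hus n).continuous.aestronglyMeasurable) w (Filter.Eventually.of_forall lim)).trans ?_
  have lim2 : Filter.Tendsto (fun n : ℕ => (CS : ℝ≥0∞) * (eLpNorm (fderiv ℝ w) (ENNReal.ofReal p) volume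
      + ENNReal.ofReal (B * ((n : ℝ) + 1)⁻¹) * eLpNorm w (ENNReal.ofReal p) volume)) Filter.atTop
      (nhds ((CS : ℝ≥0∞) * (eLpNorm (fderiv ℝ w) (ENNReal.ofReal p) volume + ENNReal.ofReal (B * 0) * eLpNorm w (ENNReal.ofReal p) volume))) := by
    apply ENNReal.Tendsto.const_mul _ (Or.inr ENNReal.coe_ne_top)
    apply Filter.Tendsto.add tendsto_const_nhds
    apply ENNReal.Tendsto.mul_const _ (Or.inr hwp)
    apply ENNReal.tendsto_ofReal
    apply Filter.Tendsto.const_mul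
    simpa using tendsto_one_div_add_atTop_nhds_zero_nat (𝕜 := ℝ)
  have : (CS : ℝ≥0∞) * (eLpNorm (fderiv ℝ w) (ENNReal.ofReal p) volume + ENNReal.ofReal (B * 0) * eLpNorm w (ENNReal.ofReal p) volume)
     = CS * eLpNorm (fderiv ℝ w) (ENNReal.ofReal p) volume := by simp
  rw [← this, ← lim2.liminf_eq]
  refine Filter.liminf_le_liminf (Filter.Eventually.of_forall fun n => ?_)
  exact (hCS _ (hus n) (huc n)).trans (by gcongr; exact hfd n)

end KMS


namespace KMS
open MeasureTheory FourierTransform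
open scoped ENNReal SchwartzMap NNReal ContDiff

/-- smooth off zero and positively homogeneous of degree `d` -/
structure HomR (d : ℤ) (h : E → ℝ) : Prop where
  smooth : ContDiffOn ℝ 2 h {0}ᶜ
  hom : ∀ t : ℝ, 0 < t → ∀ ξ, h (t • ξ) = t ^ d * h ξ

namespace HomR

lemma cast {d d' h} (H : HomR d h) (e : d = d') : HomR d' h := e ▸ H

lemma add {d f g} (hf : HomR d f) (hg : HomR d g) : HomR d (fun ξ => f ξ + g ξ) :=
  ⟨hf.smooth.add hg.smooth, fun t ht ξ => by rw [hf.hom t ht, hg.hom t ht]; ring⟩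

lemma sub {d f g} (hf : HomR d f) (hg : HomR d g) : HomR d (fun ξ => f ξ - g ξ) :=
  ⟨hf.smooth.sub hg.smooth, fun t ht ξ => by rw [hf.hom t ht, hg.hom t ht]; ring⟩

lemma mul {d d' f g} (hf : HomR d f) (hg : HomR d' g) : HomR (d + d') (fun ξ => f ξ * g ξ) :=
  ⟨hf.smooth.mul hg.smooth, fun t ht ξ => by rw [hf.hom t ht, hg.hom t ht, zpow_add₀ ht.ne']; ring⟩

lemma inv {d f} (hf : HomR d f) (h0 : ∀ ξ, ξ ≠ 0 → f ξ ≠ 0) : HomR (-d) (fun ξ => (f ξ)⁻¹) :=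
  ⟨hf.smooth.inv (fun ξ hξ => h0 ξ hξ), fun t ht ξ => by rw [hf.hom t ht, zpow_neg, mul_inv]⟩

lemma const (c : ℝ) : HomR 0 (fun _ => c) := ⟨contDiffOn_const, fun t _ ξ => by simp⟩

lemma coord (j : Fin 3) : HomR 1 (fun ξ : E => ξ j) := by
  refine ⟨ContDiff.contDiffOn (by fun_prop), fun t _ ξ => by simp⟩

lemma sum {ι : Type*} (s : Finset ι) {d} {f : ι → E → ℝ} (hf : ∀ i, HomR d (f i)) : HomR d (fun ξ => ∑ i ∈ s, f i ξ) :=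
  ⟨ContDiffOn.sum fun i _ => (hf i).smooth, fun t ht ξ => by
    rw [Finset.mul_sum]; exact Finset.sum_congr rfl fun i _ => (hf i).hom t ht ξ⟩

lemma det {B : E → Matrix (Fin 3) (Fin 3) ℝ} {d : Fin 3 → ℤ} (hB : ∀ i j, HomR (d i) (fun ξ => B ξ i j)) :
    HomR (d 0 + d 1 + d 2) (fun ξ => (B ξ).det) := by
  have h : ∀ j k l, HomR (d 0 + d 1 + d 2) (fun ξ => B ξ 0 j * B ξ 1 k * B ξ 2 l) := fun j k l =>
    ((hB 0 j).mul (hB 1 k)).mul (hB 2 l)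
  have := ((((((h 0 1 2).sub (h 0 2 1)).sub (h 1 0 2)).add (h 1 2 0)).add (h 2 0 1)).sub (h 2 1 0))
  convert this using 2 with ξ
  rw [Matrix.det_fin_three]

lemma hom0 {f} (hf : HomR 0 f) : Hom0 (fun ξ => (f ξ : ℂ)) :=
  ⟨Complex.ofRealCLM.contDiff.comp_contDiffOn hf.smooth, fun t ht ξ => by rw [hf.hom t ht]; simp⟩

end HomR

section symb
variable {N : ℕ} (c : Fin N → Fin 3 → Fin 3 → ℝ)

/-- the symbol -/
noncomputable def sa (ξ : E) : Matrix (Fin N) (Fin 3) ℝ := fun n k => ∑ l, c n k l * ξ l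

/-- normal matrix -/
noncomputable def sP (ξ : E) : Matrix (Fin 3) (Fin 3) ℝ := (sa c ξ).transpose * sa c ξ

/-- left inverse of the symbol times `ξ j` -/
noncomputable def sM (i j : Fin 3) (n : Fin N) (ξ : E) : ℝ :=
  (sP c ξ).det⁻¹ * (∑ k, (sP c ξ).adjugate i k * sa c ξ n k) * ξ j

/-- residual projection -/
noncomputable def sN (i j k l : Fin 3) (ξ : E) : ℝ :=
  (if i = k ∧ j = l then 1 else 0) - ∑ n, sM c i j n ξ * c n k l

noncomputable def sS (i j k l q m : Fin 3) (ξ : E) : ℝ :=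
  ξ q * ξ m * sN c i j k l ξ * (∑ a, ξ a * ξ a)⁻¹

/-- ellipticity of the coefficient array -/
def Ell : Prop := ∀ ξ : E, ξ ≠ 0 → ∀ v : Fin 3 → ℝ, (sa c ξ).mulVec v = 0 → v = 0

variable {c}

lemma Ell.det_ne (h : Ell c) {ξ : E} (hξ : ξ ≠ 0) : (sP c ξ).det ≠ 0 := by
  intro h0
  obtain ⟨v, hv, hv2⟩ := Matrix.exists_mulVec_eq_zero_iff.2 h0
  apply hv
  apply h ξ hξ
  have : dotProduct ((sa c ξ).mulVec v) ((sa c ξ).mulVec v) = 0 := by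
    have e : (sP c ξ).mulVec v = (sa c ξ).transpose.mulVec ((sa c ξ).mulVec v) := by
      rw [sP, Matrix.mulVec_mulVec]
    rw [Matrix.dotProduct_mulVec, ← Matrix.mulVec_transpose, ← e, hv2, zero_dotProduct]
  exact dotProduct_self_eq_zero.1 this

lemma hom_sa (n : Fin N) (k : Fin 3) : HomR 1 (fun ξ => sa c ξ n k) :=
  HomR.sum _ fun l => ((HomR.const (c n k l)).mul (HomR.coord l)).cast (by norm_num)

lemma hom_sP (i j : Fin 3) : HomR 2 (fun ξ => sP c ξ i j) := by
  have : HomR 2 (fun ξ => ∑ n, sa c ξ n i * sa c ξ n j) :=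
    HomR.sum _ fun n => ((hom_sa n i).mul (hom_sa n j)).cast (by norm_num)
  exact this

lemma hom_adj (i j : Fin 3) : HomR 4 (fun ξ => (sP c ξ).adjugate i j) := by
  have : ∀ ξ, (sP c ξ).adjugate i j = ((sP c ξ).updateRow j (Pi.single i 1)).det := fun ξ => Matrix.adjugate_apply _ _ _
  simp only [this]
  refine (HomR.det (d := fun a => if a = j then 0 else 2) ?_).cast ?_
  · intro a b
    simp only [Matrix.updateRow_apply]
    split_ifs
    · exact HomR.const _
    · exact hom_sP a b
  · fin_cases j <;> simp

lemma Ell.hom_sM (h : Ell c) (i j : Fin 3) (n : Fin N) : HomR 0 (sM c i j n) := by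
  have h1 := (HomR.det (fun a b => hom_sP (c := c) a b)).inv (fun ξ hξ => h.det_ne hξ)
  have h2 : HomR 5 (fun ξ => ∑ k, (sP c ξ).adjugate i k * sa c ξ n k) :=
    HomR.sum _ fun k => ((hom_adj i k).mul (hom_sa n k)).cast (by norm_num)
  exact ((h1.mul h2).mul (HomR.coord j)).cast (by norm_num)

lemma Ell.hom_sN (h : Ell c) (i j k l : Fin 3) : HomR 0 (sN c i j k l) :=
  (HomR.const _).sub (HomR.sum _ fun n => ((h.hom_sM i j n).mul (HomR.const _)).cast (by norm_num))

lemma sq_ne {ξ : E} (hξ : ξ ≠ 0) : ∑ a, ξ a * ξ a ≠ 0 := by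
  intro h
  apply hξ
  ext a
  have := (Finset.sum_eq_zero_iff_of_nonneg (fun a _ => mul_self_nonneg (ξ a))).1 h a (Finset.mem_univ a)
  simpa using this

lemma Ell.hom_sS (h : Ell c) (i j k l q m : Fin 3) : HomR 0 (sS c i j k l q m) := by
  have h1 : HomR 2 (fun ξ : E => ∑ a, ξ a * ξ a) :=
    HomR.sum _ fun a => ((HomR.coord a).mul (HomR.coord a)).cast (by norm_num)
  exact ((((HomR.coord q).mul (HomR.coord m)).mul (h.hom_sN i j k l)).mul (h1.inv fun ξ hξ => sq_ne hξ)).cast (by norm_num)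

lemma Ell.sM_a (h : Ell c) {ξ : E} (hξ : ξ ≠ 0) (i j k : Fin 3) :
    ∑ n, sM c i j n ξ * sa c ξ n k = (if i = k then 1 else 0) * ξ j := by
  have h1 : ∑ n, (∑ k', (sP c ξ).adjugate i k' * sa c ξ n k') * sa c ξ n k = (sP c ξ).det * (if i = k then 1 else 0) := by
    have := congrFun (congrFun (Matrix.adjugate_mul (sP c ξ)) i) k
    rw [Matrix.smul_apply, Matrix.one_apply, smul_eq_mul] at this
    rw [← this, Matrix.mul_apply]
    simp only [Finset.sum_mul]
    rw [Finset.sum_comm]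
    refine Finset.sum_congr rfl fun k' _ => ?_
    simp only [sP, Matrix.mul_apply, Matrix.transpose_apply, Finset.mul_sum, mul_assoc]
  have h2 : ∑ n, sM c i j n ξ * sa c ξ n k = (sP c ξ).det⁻¹ * ξ j * ∑ n, (∑ k', (sP c ξ).adjugate i k' * sa c ξ n k') * sa c ξ n k := by
    rw [Finset.mul_sum]
    refine Finset.sum_congr rfl fun n _ => ?_
    unfold sM; ring
  rw [h2, h1]
  have := h.det_ne hξ
  field_simp

lemma Ell.sN_ξ (h : Ell c) {ξ : E} (hξ : ξ ≠ 0) (i j k : Fin 3) : ∑ l, sN c i j k l ξ * ξ l = 0 := by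
  have h1 := h.sM_a hξ i j k
  unfold sa at h1
  unfold sN
  simp only [sub_mul, Finset.sum_sub_distrib]
  have h2 : ∑ l, (∑ n, sM c i j n ξ * c n k l) * ξ l = ∑ n, sM c i j n ξ * ∑ l, c n k l * ξ l := by
    simp only [Finset.sum_mul, Finset.mul_sum]
    rw [Finset.sum_comm]
    simp only [mul_assoc]
  rw [h2, h1]
  by_cases hik : i = k
  · simp [hik]
  · simp [hik]

/-- the key algebraic identity -/
lemma Ell.key (h : Ell c) {ξ : E} (hξ : ξ ≠ 0) (i j q : Fin 3) (φ : Fin 3 → Fin 3 → ℂ) :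
    ∑ k, ∑ l, (ξ q : ℂ) * ((sN c i j k l ξ : ℂ) * φ k l) =
      ∑ k, ∑ l, ∑ m, (sS c i j k l q m ξ : ℂ) * ((ξ m : ℂ) * φ k l - (ξ l : ℂ) * φ k m) := by
  refine Finset.sum_congr rfl fun k _ => ?_
  have h1 : ∑ l, (sN c i j k l ξ : ℂ) * ξ l = 0 := by exact_mod_cast congrArg (fun x : ℝ => (x:ℂ)) (h.sN_ξ hξ i j k)
  have h2 : (∑ a, (ξ a : ℂ) * ξ a) * (∑ a, (ξ a : ℂ) * ξ a)⁻¹ = 1 := by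
    apply mul_inv_cancel₀
    exact_mod_cast sq_ne hξ
  set D : ℂ := (∑ a, (ξ a : ℂ) * ξ a)⁻¹ with hD
  have e : ∀ l m, (sS c i j k l q m ξ : ℂ) = ξ q * ξ m * sN c i j k l ξ * D := by
    intro l m; simp only [sS, hD]; push_cast; ring
  simp only [e, Fin.sum_univ_three] at h1 h2 ⊢
  linear_combination (-(ξ q : ℂ)) * (sN c i j k 0 ξ * φ k 0 + sN c i j k 1 ξ * φ k 1 + sN c i j k 2 ξ * φ k 2) * h2
    + (ξ q * D * (ξ 0 * φ k 0 + ξ 1 * φ k 1 + ξ 2 * φ k 2)) * h1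

end symb

end KMS


namespace KMS
open MeasureTheory FourierTransform
open scoped ENNReal SchwartzMap NNReal ContDiff

lemma Cc.pd {f} (h : Cc f) (m : Fin 3) : Cc (fun x => fderiv ℝ f x (ee m)) := by
  refine ⟨?_, ?_⟩
  · exact (h.smooth.fderiv_right (m := ∞) (by norm_cast)).clm_apply contDiff_const
  · exact (h.supp.fderiv (𝕜 := ℝ)).comp_left (g := fun L : E →L[ℝ] ℂ => L (ee m)) (by simp)

lemma Cc.sub {f g} (hf : Cc f) (hg : Cc g) : Cc (fun x => f x - g x) :=
  ⟨hf.smooth.sub hg.smooth, hf.supp.sub hg.supp⟩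

lemma Cc.sum {ι : Type*} (s : Finset ι) {f : ι → E → ℂ} (hf : ∀ i, Cc (f i)) : Cc (fun x => ∑ i ∈ s, f i x) := by
  classical
  induction s using Finset.induction_on with
  | empty => simpa using (⟨contDiff_const, HasCompactSupport.zero⟩ : Cc (fun _ => 0))
  | insert a s ha ih =>
    simp only [Finset.sum_insert ha]
    exact ⟨(hf a).smooth.add ih.smooth, (hf a).supp.add ih.supp⟩

lemma Cc.smul {f} (hf : Cc f) (c : ℂ) : Cc (fun x => c * f x) :=
  ⟨contDiff_const.mul hf.smooth, hf.supp.mul_left⟩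

lemma Cc.fd_int {f} (h : Cc f) : Integrable (fderiv ℝ f) :=
  (h.smooth.continuous_fderiv (by simp)).integrable_of_hasCompactSupport (h.supp.fderiv (𝕜 := ℝ))

lemma inv_pd {f} (h : Cc f) (m : Fin 3) (ξ : E) :
    𝓕⁻ (fun x => fderiv ℝ f x (ee m)) ξ = -(2 * Real.pi * Complex.I) * (ξ m * 𝓕⁻ f ξ) := by
  rw [Real.fourierInv_eq_fourier_neg, Real.fourierInv_eq_fourier_neg]
  have h1 := Real.fourier_fderiv h.W.int (h.smooth.differentiable (by simp)) h.fd_int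
  have h2 := Real.fourier_continuousLinearMap_apply (a := ee m) (v := -ξ) h.fd_int
  rw [h1] at h2
  rw [← h2]
  have h3 : ((innerSL ℝ) ξ) (ee m) = ξ m := by rw [← inner_ee m ξ, real_inner_comm]; rfl
  simp [VectorFourier.fourierSMulRight_apply, h3]

lemma fourier_sum_fun {ι : Type*} (s : Finset ι) {f : ι → E → ℂ} (hf : ∀ i, Integrable (f i)) (x : E) :
    𝓕 (fun ξ => ∑ i ∈ s, f i ξ) x = ∑ i ∈ s, 𝓕 (f i) x := by
  simp only [Real.fourier_eq, Finset.smul_sum]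
  rw [integral_finsetSum]
  intro i _
  exact (Real.fourierIntegral_convergent_iff x).2 (hf i)

lemma inv_sum_fun {ι : Type*} (s : Finset ι) {f : ι → E → ℂ} (hf : ∀ i, Integrable (f i)) (x : E) :
    𝓕⁻ (fun ξ => ∑ i ∈ s, f i ξ) x = ∑ i ∈ s, 𝓕⁻ (f i) x := by
  simp only [Real.fourierInv_eq_fourier_neg]
  exact fourier_sum_fun s hf _

lemma inv_smul_fun (c : ℂ) (f : E → ℂ) (x : E) : 𝓕⁻ (fun ξ => c * f ξ) x = c * 𝓕⁻ f x := by
  simp only [Real.fourierInv_eq_fourier_neg]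
  rw [fourier_smul_fun]; rfl

lemma inv_sub_fun {f g : E → ℂ} (hf : Integrable f) (hg : Integrable g) (x : E) :
    𝓕⁻ (fun ξ => f ξ - g ξ) x = 𝓕⁻ f x - 𝓕⁻ g x := by
  have : (fun ξ => f ξ - g ξ) = fun ξ => f ξ + (-1) * g ξ := by ext; ring
  rw [this]
  simp only [Real.fourierInv_eq_fourier_neg]
  rw [fourier_add_fun hf (hg.const_mul _), fourier_smul_fun]
  simp [sub_eq_add_neg]

lemma mom_int {m f : E → ℂ} (hm : BM m) (hf : Cc f) (q : Fin 3) :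
    Integrable (fun ξ : E => -(2 * Real.pi * Complex.I) * (ξ q * (m ξ * 𝓕⁻ f ξ))) := by
  have h0 := (hm.W hf.W_inv).int
  apply Integrable.const_mul
  refine ((moments hm hf 1).mono' ?_ ?_)
  · refine AEStronglyMeasurable.mul ?_ h0.1
    exact Continuous.aestronglyMeasurable (by fun_prop)
  · refine Filter.Eventually.of_forall fun ξ => ?_
    rw [norm_mul, pow_one]
    gcongr
    simpa using PiLp.norm_apply_le (p := 2) ξ q

lemma T_pd {m f : E → ℂ} (hm : BM m) (hf : Cc f) (q : Fin 3) (x : E) :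
    fderiv ℝ (T m f) x (ee q) = 𝓕 (fun ξ : E => -(2 * Real.pi * Complex.I) * (ξ q * (m ξ * 𝓕⁻ f ξ))) x := by
  have h0 := (hm.W hf.W_inv).int
  have h1 : Integrable (fun v => ‖v‖ * ‖m v * 𝓕⁻ f v‖) := by simpa using moments hm hf 1
  have h2 : Integrable (VectorFourier.fourierSMulRight (innerSL ℝ) (fun v => m v * 𝓕⁻ f v)) := by
    refine (h1.const_mul (2 * Real.pi * ‖innerSL ℝ (E := E)‖)).mono' h0.1.fourierSMulRight ?_
    refine Filter.Eventually.of_forall fun ξ => ?_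
    refine (VectorFourier.norm_fourierSMulRight_le _ _ _).trans (le_of_eq (by ring))
  unfold T
  rw [Real.fderiv_fourier h0 h1, Real.fourier_continuousLinearMap_apply h2]
  refine congrFun (congrArg _ (funext fun ξ => ?_)) x
  have h3 : ((innerSL ℝ) ξ) (ee q) = ξ q := by rw [← inner_ee q ξ, real_inner_comm]; rfl
  simp [VectorFourier.fourierSMulRight_apply, h3]

/-- representation of the residual part -/
lemma sN_rep {N : ℕ} {c : Fin N → Fin 3 → Fin 3 → ℝ} (h : Ell c) (i j : Fin 3) {F : Fin 3 → Fin 3 → E → ℂ}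
    (hF : ∀ k l, Cc (F k l)) (x : E) :
    ∑ k, ∑ l, T (fun ξ => (sN c i j k l ξ : ℂ)) (F k l) x =
      F i j x - ∑ n, T (fun ξ => (sM c i j n ξ : ℂ)) (fun y => ∑ k, ∑ l, (c n k l : ℂ) * F k l y) x := by
  have hN := fun k l => (h.hom_sN i j k l).hom0.BM
  have hM := fun n => (h.hom_sM i j n).hom0.BM
  have hG : ∀ n, Cc (fun y => ∑ k, ∑ l, (c n k l : ℂ) * F k l y) := fun n =>
    Cc.sum _ fun k => Cc.sum _ fun l => (hF k l).smul _
  have e1 : ∑ k, ∑ l, T (fun ξ => (sN c i j k l ξ : ℂ)) (F k l) x =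
      𝓕 (fun ξ => ∑ k, ∑ l, (sN c i j k l ξ : ℂ) * 𝓕⁻ (F k l) ξ) x := by
    rw [fourier_sum_fun _ (fun k => integrable_finsetSum _ fun l _ => ((hN k l).W (hF k l).W_inv).int)]
    refine Finset.sum_congr rfl fun k _ => ?_
    rw [fourier_sum_fun _ (fun l => ((hN k l).W (hF k l).W_inv).int)]
    rfl
  have e2 : ∑ n, T (fun ξ => (sM c i j n ξ : ℂ)) (fun y => ∑ k, ∑ l, (c n k l : ℂ) * F k l y) x
      = 𝓕 (fun ξ => ∑ n, (sM c i j n ξ : ℂ) * 𝓕⁻ (fun y => ∑ k, ∑ l, (c n k l : ℂ) * F k l y) ξ) x := by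
    rw [fourier_sum_fun _ (fun n => ((hM n).W (hG n).W_inv).int)]
    rfl
  rw [e1, e2, eq_sub_iff_add_eq]
  conv_rhs => rw [← (hF i j).fourier_inv]
  rw [← Pi.add_apply, ← fourier_add_fun]
  · refine congrFun (congrArg _ (funext fun ξ => ?_)) x
    have e3 : ∀ n, 𝓕⁻ (fun y => ∑ k, ∑ l, (c n k l : ℂ) * F k l y) ξ = ∑ k, ∑ l, (c n k l : ℂ) * 𝓕⁻ (F k l) ξ := by
      intro n
      rw [inv_sum_fun _ fun k => integrable_finsetSum _ fun l _ => ((hF k l).smul _).W.int]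
      refine Finset.sum_congr rfl fun k _ => ?_
      rw [inv_sum_fun _ fun l => ((hF k l).smul _).W.int]
      exact Finset.sum_congr rfl fun l _ => inv_smul_fun _ _ _
    simp only [e3]
    have e4 : ∑ n, (sM c i j n ξ : ℂ) * ∑ k, ∑ l, (c n k l : ℂ) * 𝓕⁻ (F k l) ξ =
        ∑ k, ∑ l, (∑ n, (sM c i j n ξ : ℂ) * c n k l) * 𝓕⁻ (F k l) ξ := by
      simp only [Finset.mul_sum, Finset.sum_mul]
      rw [Finset.sum_comm]
      refine Finset.sum_congr rfl fun k _ => ?_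
      rw [Finset.sum_comm]
      simp only [mul_assoc]
    rw [e4, ← Finset.sum_add_distrib]
    simp only [← Finset.sum_add_distrib, ← add_mul]
    have e5 : ∀ k l, (sN c i j k l ξ : ℂ) + ∑ n, (sM c i j n ξ : ℂ) * c n k l = if i = k ∧ j = l then 1 else 0 := by
      intro k l
      unfold sN
      split_ifs <;> push_cast <;> simp
    simp only [e5]
    rw [Finset.sum_eq_single i, Finset.sum_eq_single j]
    · simp
    · intro b _ hb; simp [hb.symm]
    · simp
    · intro b _ hb; simp [hb.symm]
    · simp
  · exact integrable_finsetSum _ fun k _ => integrable_finsetSum _ fun l _ => ((hN k l).W (hF k l).W_inv).int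
  · exact integrable_finsetSum _ fun n _ => ((hM n).W (hG n).W_inv).int

lemma sN_deriv {N : ℕ} {c : Fin N → Fin 3 → Fin 3 → ℝ} (h : Ell c) (i j q : Fin 3) {F : Fin 3 → Fin 3 → E → ℂ}
    (hF : ∀ k l, Cc (F k l)) (x : E) :
    ∑ k, ∑ l, fderiv ℝ (T (fun ξ => (sN c i j k l ξ : ℂ)) (F k l)) x (ee q) =
      ∑ k, ∑ l, ∑ m, T (fun ξ => (sS c i j k l q m ξ : ℂ))
        (fun y => fderiv ℝ (F k l) y (ee m) - fderiv ℝ (F k m) y (ee l)) x := by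
  have hN := fun k l => (h.hom_sN i j k l).hom0.BM
  have hS := fun k l m => (h.hom_sS i j k l q m).hom0.BM
  have hG : ∀ k l m, Cc (fun y => fderiv ℝ (F k l) y (ee m) - fderiv ℝ (F k m) y (ee l)) := fun k l m =>
    ((hF k l).pd m).sub ((hF k m).pd l)
  have e1 : ∑ k, ∑ l, fderiv ℝ (T (fun ξ => (sN c i j k l ξ : ℂ)) (F k l)) x (ee q) =
      𝓕 (fun ξ : E => ∑ k, ∑ l, -(2 * Real.pi * Complex.I) * (ξ q * ((sN c i j k l ξ : ℂ) * 𝓕⁻ (F k l) ξ))) x := by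
    rw [fourier_sum_fun _ (fun k => integrable_finsetSum _ fun l _ => mom_int (hN k l) (hF k l) q)]
    refine Finset.sum_congr rfl fun k _ => ?_
    rw [fourier_sum_fun _ (fun l => mom_int (hN k l) (hF k l) q)]
    exact Finset.sum_congr rfl fun l _ => T_pd (hN k l) (hF k l) q x
  have hI := fun k l m => ((hS k l m).W (hG k l m).W_inv).int
  have e2 : ∑ k, ∑ l, ∑ m, T (fun ξ => (sS c i j k l q m ξ : ℂ))
        (fun y => fderiv ℝ (F k l) y (ee m) - fderiv ℝ (F k m) y (ee l)) x
      = 𝓕 (fun ξ => ∑ k, ∑ l, ∑ m, (sS c i j k l q m ξ : ℂ) *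
        𝓕⁻ (fun y => fderiv ℝ (F k l) y (ee m) - fderiv ℝ (F k m) y (ee l)) ξ) x := by
    rw [fourier_sum_fun _ (fun k => integrable_finsetSum _ fun l _ => integrable_finsetSum _ fun m _ => hI k l m)]
    refine Finset.sum_congr rfl fun k _ => ?_
    rw [fourier_sum_fun _ (fun l => integrable_finsetSum _ fun m _ => hI k l m)]
    refine Finset.sum_congr rfl fun l _ => ?_
    rw [fourier_sum_fun _ (fun m => hI k l m)]
    rfl
  rw [e1, e2, Real.fourier_eq, Real.fourier_eq]
  apply integral_congr_ae
  have : ∀ᵐ ξ : E, ξ ≠ 0 := by simp [ae_iff, measure_singleton]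
  filter_upwards [this] with ξ hξ
  congr 1
  have e3 : ∀ k l m, 𝓕⁻ (fun y => fderiv ℝ (F k l) y (ee m) - fderiv ℝ (F k m) y (ee l)) ξ =
      -(2 * Real.pi * Complex.I) * ((ξ m : ℂ) * 𝓕⁻ (F k l) ξ - ξ l * 𝓕⁻ (F k m) ξ) := by
    intro k l m
    rw [inv_sub_fun ((hF k l).pd m).W.int ((hF k m).pd l).W.int, inv_pd (hF k l), inv_pd (hF k m)]
    ring
  have := congrArg (fun z => -(2 * Real.pi * Complex.I) * z) (h.key hξ i j q (fun k l => 𝓕⁻ (F k l) ξ))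
  simp only [Finset.mul_sum] at this
  rw [this]
  simp only [e3]
  refine Finset.sum_congr rfl fun k _ => Finset.sum_congr rfl fun l _ => Finset.sum_congr rfl fun m _ => ?_
  ring

end KMS


namespace KMS
open MeasureTheory FourierTransform
open scoped ENNReal SchwartzMap NNReal ContDiff

lemma clm_norm_le (L : E →L[ℝ] ℂ) : ‖L‖ ≤ ∑ q, ‖L (ee q)‖ := by
  refine L.opNorm_le_bound (Finset.sum_nonneg fun _ _ => norm_nonneg _) fun v => ?_
  have hv : v = ∑ q, v q • ee q := by
    ext a
    fin_cases a <;> simp [Fin.sum_univ_three, ee]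
  have h1 : L v = ∑ q, v q • L (ee q) := by
    conv_lhs => rw [hv]
    simp only [map_sum, map_smul]
  rw [h1, Finset.sum_mul]
  refine (norm_sum_le _ _).trans (Finset.sum_le_sum fun q _ => ?_)
  rw [norm_smul, mul_comm]
  gcongr
  exact PiLp.norm_apply_le (p := 2) v q

lemma eLpNorm_fderiv_le {w : E → ℂ} (hw : ContDiff ℝ ∞ w) {r : ℝ≥0∞} (hr : 1 ≤ r) :
    eLpNorm (fderiv ℝ w) r volume ≤ ∑ q, eLpNorm (fun x => fderiv ℝ w x (ee q)) r volume := by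
  have hc : ∀ q, Continuous (fun x => fderiv ℝ w x (ee q)) := fun q =>
    (hw.continuous_fderiv (by simp)).clm_apply continuous_const
  calc eLpNorm (fderiv ℝ w) r volume ≤ eLpNorm (∑ q, fun x => ‖fderiv ℝ w x (ee q)‖) r volume := by
        refine eLpNorm_mono_real fun x => ?_
        rw [Finset.sum_apply]
        exact clm_norm_le _
    _ ≤ ∑ q, eLpNorm (fun x => ‖fderiv ℝ w x (ee q)‖) r volume :=
        eLpNorm_sum_le (fun q _ => (hc q).norm.aestronglyMeasurable) hr
    _ = _ := Finset.sum_congr rfl fun q _ => eLpNorm_norm _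

lemma Cc.memLp {f} (h : Cc f) (r : ℝ≥0∞) : MemLp f r volume :=
  h.cont.memLp_of_hasCompactSupport h.supp

/-- sum bound -/
lemma eLpNorm_sum3 {ι : Type*} [Fintype ι] {f : ι → E → ℂ} (hf : ∀ i, Continuous (f i)) {r : ℝ≥0∞} (hr : 1 ≤ r) :
    eLpNorm (fun x => ∑ i, f i x) r volume ≤ ∑ i, eLpNorm (f i) r volume := by
  have := eLpNorm_sum_le (s := Finset.univ) (fun i _ => (hf i).aestronglyMeasurable (μ := volume)) hr
  convert this using 2
  ext x; simp

lemma euclid {N : ℕ} {c : Fin N → Fin 3 → Fin 3 → ℝ} (h : Ell c) {p : ℝ} (hp1 : 1 < p) (hp3 : p < 3) (i j : Fin 3) :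
    ∃ C : ℝ≥0, ∀ F : Fin 3 → Fin 3 → E → ℂ, (∀ k l, Cc (F k l)) →
      eLpNorm (F i j) (ENNReal.ofReal (3 * p / (3 - p))) volume ≤
        C * (∑ n, eLpNorm (fun y => ∑ k, ∑ l, (c n k l : ℂ) * F k l y) (ENNReal.ofReal (3 * p / (3 - p))) volume
          + ∑ k, ∑ l, ∑ m, eLpNorm (fun y => fderiv ℝ (F k l) y (ee m) - fderiv ℝ (F k m) y (ee l))
            (ENNReal.ofReal p) volume) := by
  set ps : ℝ := 3 * p / (3 - p) with hps
  have hps1 : 1 < ps := by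
    rw [hps, lt_div_iff₀ (by linarith)]; linarith
  have hp1' : (1 : ℝ≥0∞) ≤ ENNReal.ofReal p := by
    rw [← ENNReal.ofReal_one]; exact ENNReal.ofReal_le_ofReal hp1.le
  have hps1' : (1 : ℝ≥0∞) ≤ ENNReal.ofReal ps := by
    rw [← ENNReal.ofReal_one]; exact ENNReal.ofReal_le_ofReal hps1.le
  obtain ⟨G, hG⟩ := gns hp1 hp3
  choose CM hCM using fun n => T_Lp (h.hom_sM i j n).hom0 hps1
  choose CN hCN using fun k l => T_Lp (h.hom_sN i j k l).hom0 hp1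
  choose CS hCS using fun k l q m => T_Lp (h.hom_sS i j k l q m).hom0 hp1
  set KS : ℝ≥0 := ∑ k, ∑ l, ∑ q, ∑ m, CS k l q m with hKS
  set KM : ℝ≥0 := ∑ n, CM n with hKM
  have hKSle : ∀ k l q m, CS k l q m ≤ KS := by
    intro k l q m
    calc CS k l q m ≤ ∑ m, CS k l q m := Finset.single_le_sum (f := fun m => CS k l q m) (fun _ _ => bot_le) (Finset.mem_univ m)
      _ ≤ ∑ q, ∑ m, CS k l q m := Finset.single_le_sum (f := fun q => ∑ m, CS k l q m) (fun _ _ => bot_le) (Finset.mem_univ q)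
      _ ≤ ∑ l, ∑ q, ∑ m, CS k l q m := Finset.single_le_sum (f := fun l => ∑ q, ∑ m, CS k l q m) (fun _ _ => bot_le) (Finset.mem_univ l)
      _ ≤ KS := Finset.single_le_sum (f := fun k => ∑ l, ∑ q, ∑ m, CS k l q m) (fun _ _ => bot_le) (Finset.mem_univ k)
  have hKMle : ∀ n, CM n ≤ KM := fun n => Finset.single_le_sum (f := CM) (fun _ _ => bot_le) (Finset.mem_univ n)
  refine ⟨KM + G * (3 * KS), fun F hF => ?_⟩
  have hN := fun k l => (h.hom_sN i j k l).hom0.BM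
  have hM := fun n => (h.hom_sM i j n).hom0.BM
  have hS := fun k l q m => (h.hom_sS i j k l q m).hom0.BM
  have hAF : ∀ n, Cc (fun y => ∑ k, ∑ l, (c n k l : ℂ) * F k l y) := fun n =>
    Cc.sum _ fun k => Cc.sum _ fun l => (hF k l).smul _
  have hD : ∀ k l m, Cc (fun y => fderiv ℝ (F k l) y (ee m) - fderiv ℝ (F k m) y (ee l)) := fun k l m =>
    ((hF k l).pd m).sub ((hF k m).pd l)
  set w : E → ℂ := fun x => ∑ k, ∑ l, T (fun ξ => (sN c i j k l ξ : ℂ)) (F k l) x with hw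
  have hTs := fun k l => T_smooth (hN k l) (hF k l)
  have hws : ContDiff ℝ ∞ w := ContDiff.sum fun k _ => ContDiff.sum fun l _ => hTs k l
  have hwp : eLpNorm w (ENNReal.ofReal p) volume ≠ ⊤ := by
    refine ne_top_of_le_ne_top ?_ ((eLpNorm_sum3 (fun k => continuous_finsetSum _ fun l _ => (hTs k l).continuous) hp1').trans
      (Finset.sum_le_sum fun k _ => (eLpNorm_sum3 (fun l => (hTs k l).continuous) hp1').trans
        (Finset.sum_le_sum fun l _ => hCN k l (F k l) (hF k l))))
    refine ENNReal.sum_ne_top.2 fun k _ => ENNReal.sum_ne_top.2 fun l _ => ?_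
    exact ENNReal.mul_ne_top ENNReal.coe_ne_top ((hF k l).memLp _).eLpNorm_ne_top
  set D : ℝ≥0∞ := ∑ k, ∑ l, ∑ m, eLpNorm (fun y => fderiv ℝ (F k l) y (ee m) - fderiv ℝ (F k m) y (ee l))
            (ENNReal.ofReal p) volume with hDdef
  set B : ℝ≥0∞ := ∑ n, eLpNorm (fun y => ∑ k, ∑ l, (c n k l : ℂ) * F k l y) (ENNReal.ofReal ps) volume with hB
  have hq : ∀ q, eLpNorm (fun x => fderiv ℝ w x (ee q)) (ENNReal.ofReal p) volume ≤ KS * D := by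
    intro q
    have e : (fun x => fderiv ℝ w x (ee q)) = fun x => ∑ k, ∑ l, ∑ m, T (fun ξ => (sS c i j k l q m ξ : ℂ))
        (fun y => fderiv ℝ (F k l) y (ee m) - fderiv ℝ (F k m) y (ee l)) x := by
      ext x
      rw [← sN_deriv h i j q hF x]
      have hd := fun k l => ((hTs k l).differentiable (by simp)) x
      have : HasFDerivAt w (∑ k, ∑ l, fderiv ℝ (T (fun ξ => (sN c i j k l ξ : ℂ)) (F k l)) x) x :=
        HasFDerivAt.fun_sum fun k _ => HasFDerivAt.fun_sum fun l _ => (hd k l).hasFDerivAt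
      rw [this.fderiv]
      simp
    rw [e]
    have hc := fun k l m => T_cont (hS k l q m) (hD k l m)
    refine (eLpNorm_sum3 (fun k => continuous_finsetSum _ fun l _ => continuous_finsetSum _ fun m _ => hc k l m) hp1').trans ?_
    rw [hDdef, Finset.mul_sum]
    refine Finset.sum_le_sum fun k _ => ?_
    refine (eLpNorm_sum3 (fun l => continuous_finsetSum _ fun m _ => hc k l m) hp1').trans ?_
    rw [Finset.mul_sum]
    refine Finset.sum_le_sum fun l _ => ?_
    refine (eLpNorm_sum3 (fun m => hc k l m) hp1').trans ?_
    rw [Finset.mul_sum]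
    refine Finset.sum_le_sum fun m _ => ?_
    refine (hCS k l q m _ (hD k l m)).trans ?_
    gcongr
    exact hKSle k l q m
  have hw1 : eLpNorm w (ENNReal.ofReal ps) volume ≤ G * (3 * KS) * D := by
    refine (hG w hws hwp).trans ?_
    rw [mul_assoc]
    gcongr
    refine (eLpNorm_fderiv_le hws hp1').trans ((Finset.sum_le_sum fun q _ => hq q).trans (le_of_eq ?_))
    simp [mul_assoc]
  have hF' : F i j = fun x => w x + ∑ n, T (fun ξ => (sM c i j n ξ : ℂ)) (fun y => ∑ k, ∑ l, (c n k l : ℂ) * F k l y) x := by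
    ext x
    rw [hw]
    simp only
    rw [sN_rep h i j hF x]
    ring
  have hMc := fun n => T_cont (hM n) (hAF n)
  have hb : eLpNorm (fun x => ∑ n, T (fun ξ => (sM c i j n ξ : ℂ)) (fun y => ∑ k, ∑ l, (c n k l : ℂ) * F k l y) x)
      (ENNReal.ofReal ps) volume ≤ KM * B := by
    refine (eLpNorm_sum3 hMc hps1').trans ?_
    rw [hB, Finset.mul_sum]
    refine Finset.sum_le_sum fun n _ => (hCM n _ (hAF n)).trans ?_
    gcongr
    exact hKMle n
  calc eLpNorm (F i j) (ENNReal.ofReal ps) volume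
      ≤ eLpNorm w (ENNReal.ofReal ps) volume + eLpNorm (fun x => ∑ n, T (fun ξ => (sM c i j n ξ : ℂ)) (fun y => ∑ k, ∑ l, (c n k l : ℂ) * F k l y) x)
          (ENNReal.ofReal ps) volume := by
        conv_lhs => rw [hF']
        exact eLpNorm_add_le hws.continuous.aestronglyMeasurable
          (continuous_finsetSum _ fun n _ => hMc n).aestronglyMeasurable hps1'
    _ ≤ G * (3 * KS) * D + KM * B := add_le_add hw1 hb
    _ ≤ (KM + G * (3 * KS) : ℝ≥0) * (B + D) := by
        push_cast
        rw [add_comm, add_mul]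
        gcongr
        · exact le_self_add
        · exact le_add_self

end KMS


namespace KMS
open MeasureTheory FourierTransform
open scoped ENNReal SchwartzMap NNReal ContDiff

/-- complexified components on Euclidean space -/
noncomputable def cp (f : (Fin 3 → ℝ) → ℝ) (y : E) : ℂ := ((f (WithLp.ofLp y) : ℝ) : ℂ)

lemma cc_cp {f : (Fin 3 → ℝ) → ℝ} (hf : ContDiff ℝ ∞ f) (hs : HasCompactSupport f) : Cc (cp f) := by
  refine ⟨?_, ?_⟩
  · exact Complex.ofRealCLM.contDiff.comp (hf.comp (EuclideanSpace.equiv (Fin 3) ℝ).contDiff)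
  · have h1 : HasCompactSupport (f ∘ (EuclideanSpace.equiv (Fin 3) ℝ).toHomeomorph) :=
      hs.comp_homeomorph _
    exact h1.comp_left (g := fun r : ℝ => (r : ℂ)) (by simp)

lemma eLpNorm_cp {f : (Fin 3 → ℝ) → ℝ} (hf : Continuous f) (r : ℝ≥0∞) :
    eLpNorm (cp f) r volume = eLpNorm f r volume := by
  have h1 : eLpNorm (f ∘ (WithLp.ofLp : E → Fin 3 → ℝ)) r volume = eLpNorm f r volume :=
    eLpNorm_comp_measurePreserving hf.aestronglyMeasurable (PiLp.volume_preserving_ofLp (Fin 3))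
  rw [← h1]
  refine eLpNorm_congr_norm_ae (Filter.Eventually.of_forall fun y => ?_)
  simp [cp]

lemma fderiv_cp {f : (Fin 3 → ℝ) → ℝ} (hf : ContDiff ℝ ∞ f) (y : E) (m : Fin 3) :
    fderiv ℝ (cp f) y (ee m) = ((pd m f (WithLp.ofLp y) : ℝ) : ℂ) := by
  have h1 : HasFDerivAt f (fderiv ℝ f (WithLp.ofLp y)) (EuclideanSpace.equiv (Fin 3) ℝ y) :=
    (hf.differentiable (by simp) _).hasFDerivAt
  have h2 := (Complex.ofRealCLM.hasFDerivAt).comp y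
    (h1.comp y (EuclideanSpace.equiv (Fin 3) ℝ).hasFDerivAt)
  have h3 : HasFDerivAt (cp f) _ y := h2
  rw [h3.fderiv]
  have h4 : (EuclideanSpace.equiv (Fin 3) ℝ) (ee m) = Pi.single m 1 := by
    ext a; simp [ee, Pi.single_apply]
  simp only [ContinuousLinearMap.comp_apply, ContinuousLinearEquiv.coe_coe, h4]
  rfl

lemma comp_le (v : Fin 3 → Fin 3 → ℝ) : ‖v‖ ≤ ∑ i, ∑ j, ‖v i j‖ := by
  refine (pi_norm_le_iff_of_nonneg (by positivity)).2 fun i => ?_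
  refine (pi_norm_le_iff_of_nonneg (by positivity)).2 fun j => ?_
  calc ‖v i j‖ ≤ ∑ j, ‖v i j‖ := Finset.single_le_sum (f := fun j => ‖v i j‖) (fun _ _ => norm_nonneg _) (Finset.mem_univ j)
    _ ≤ _ := Finset.single_le_sum (f := fun i => ∑ j, ‖v i j‖) (fun _ _ => Finset.sum_nonneg fun _ _ => norm_nonneg _) (Finset.mem_univ i)

lemma curl_le (F : (Fin 3 → ℝ) → Fin 3 → Fin 3 → ℝ) (x : Fin 3 → ℝ) (k l m : Fin 3) :
    ‖pd m (fun y => F y k l) x - pd l (fun y => F y k m) x‖ ≤ ‖mcurl F x‖ := by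
  have h : ∀ a, ‖mcurl F x k a‖ ≤ ‖mcurl F x‖ := fun a =>
    (norm_le_pi_norm (mcurl F x k) a).trans (norm_le_pi_norm (mcurl F x) k)
  have h0 := h 0
  have h1 := h 1
  have h2 := h 2
  simp only [mcurl, Matrix.cons_val_zero, Matrix.cons_val_one, Matrix.cons_val] at h0 h1 h2
  change _ ≤ ‖mcurl F x‖ at h0 h1 h2
  have hn := norm_nonneg (mcurl F x)
  fin_cases l <;> fin_cases m <;> simp only [Fin.zero_eta, Fin.mk_one, Fin.reduceFinMk, sub_self, norm_zero, hn]
  all_goals first | exact h0 | exact h1 | exact h2 | (rw [norm_sub_rev]; first | exact h0 | exact h1 | exact h2)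

lemma A_apply {N : ℕ} (A : (Fin 3 → Fin 3 → ℝ) →ₗ[ℝ] (Fin N → ℝ)) (v : Fin 3 → Fin 3 → ℝ) (n : Fin N) :
    A v n = ∑ k, ∑ l, A (Pi.single k (Pi.single l 1)) n * v k l := by
  have hv : v = ∑ k, ∑ l, v k l • (Pi.single k (Pi.single l (1:ℝ)) : Fin 3 → Fin 3 → ℝ) := by
    ext a b
    fin_cases a <;> fin_cases b <;> simp [Fin.sum_univ_three]
  conv_lhs => rw [hv]
  simp only [map_sum, map_smul, Finset.sum_apply, Pi.smul_apply, smul_eq_mul]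
  simp only [mul_comm]

lemma ell_of {N : ℕ} {A : (Fin 3 → Fin 3 → ℝ) →ₗ[ℝ] (Fin N → ℝ)} (hA : IsElliptic A) :
    Ell (fun n k l => A (Pi.single k (Pi.single l 1)) n) := by
  intro ξ hξ v hv
  have h1 : (WithLp.ofLp ξ : Fin 3 → ℝ) ≠ 0 := fun h => hξ (by ext a; simpa using congrFun h a)
  apply hA _ h1
  have h2 : (fun i j => (0 : Fin 3 → ℝ) i * WithLp.ofLp ξ j) = (0 : Fin 3 → Fin 3 → ℝ) := by
    ext a b; simp
  simp only [h2, map_zero]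
  ext n
  rw [A_apply]
  have h3 := congrFun hv n
  simp only [Matrix.mulVec, dotProduct, sa, Finset.sum_mul] at h3
  rw [← h3]
  refine Finset.sum_congr rfl fun k _ => Finset.sum_congr rfl fun l _ => ?_
  ring

lemma mcurl_supp (F : (Fin 3 → ℝ) → Fin 3 → Fin 3 → ℝ) : Function.support (mcurl F) ⊆ tsupport F := by
  intro x hx
  by_contra hn
  apply hx
  have h0 : F =ᶠ[nhds x] 0 := notMem_tsupport_iff_eventuallyEq.1 hn
  have h1 : ∀ j k l, pd j (fun y => F y k l) x = 0 := by
    intro j k l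
    have : (fun y => F y k l) =ᶠ[nhds x] fun _ => (0 : ℝ) := by
      filter_upwards [h0] with y hy
      rw [hy]; rfl
    unfold pd
    rw [this.fderiv_eq]
    simp
  ext i a
  fin_cases a <;> simp [mcurl, h1]

lemma main {N : ℕ} {A : (Fin 3 → Fin 3 → ℝ) →ₗ[ℝ] (Fin N → ℝ)} (hA : IsElliptic A)
    {p : ℝ} (hp1 : 1 < p) (hp3 : p < 3) :
    ∃ C : ℝ≥0, ∀ F : (Fin 3 → ℝ) → Fin 3 → Fin 3 → ℝ, ContDiff ℝ ∞ F → HasCompactSupport F →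
      eLpNorm F (ENNReal.ofReal (3 * p / (3 - p))) volume ≤
        C * (eLpNorm (fun x => A (F x)) (ENNReal.ofReal (3 * p / (3 - p))) volume +
          eLpNorm (fun x => mcurl F x) (ENNReal.ofReal p) volume) := by
  choose C hC using fun i j => euclid (ell_of hA) hp1 hp3 i j
  set ps : ℝ := 3 * p / (3 - p) with hps
  have hps1 : 1 < ps := by
    rw [hps, lt_div_iff₀ (by linarith)]; linarith
  have hps1' : (1 : ℝ≥0∞) ≤ ENNReal.ofReal ps := by
    rw [← ENNReal.ofReal_one]; exact ENNReal.ofReal_le_ofReal hps1.le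
  refine ⟨(∑ i, ∑ j, C i j) * (N + 27), fun F hF hFs => ?_⟩
  have hFc : ∀ k l, ContDiff ℝ ∞ (fun x => F x k l) := fun k l =>
    contDiff_pi.1 (contDiff_pi.1 hF k) l
  have hFcs : ∀ k l, HasCompactSupport (fun x => F x k l) := fun k l =>
    hFs.comp_left (g := fun v : Fin 3 → Fin 3 → ℝ => v k l) rfl
  have hcc : ∀ k l, Cc (cp (fun x => F x k l)) := fun k l => cc_cp (hFc k l) (hFcs k l)
  set a := eLpNorm (fun x => A (F x)) (ENNReal.ofReal ps) volume with ha
  set b := eLpNorm (fun x => mcurl F x) (ENNReal.ofReal p) volume with hb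
  have hAn : ∀ n, eLpNorm (fun y => ∑ k, ∑ l, ((A (Pi.single k (Pi.single l 1)) n : ℝ) : ℂ) * cp (fun x => F x k l) y)
      (ENNReal.ofReal ps) volume ≤ a := by
    intro n
    have e : (fun y => ∑ k, ∑ l, ((A (Pi.single k (Pi.single l 1)) n : ℝ) : ℂ) * cp (fun x => F x k l) y) =
        cp (fun x => A (F x) n) := by
      ext y
      unfold cp
      simp only []
      rw [A_apply A (F (WithLp.ofLp y)) n]
      push_cast
      rfl
    rw [e, eLpNorm_cp]
    · exact eLpNorm_mono fun x => norm_le_pi_norm (A (F x)) n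
    · exact (continuous_apply n).comp (A.continuous_of_finiteDimensional.comp hF.continuous)
  have hDn : ∀ k l m, eLpNorm (fun y => fderiv ℝ (cp (fun x => F x k l)) y (ee m) - fderiv ℝ (cp (fun x => F x k m)) y (ee l))
      (ENNReal.ofReal p) volume ≤ b := by
    intro k l m
    have e : (fun y => fderiv ℝ (cp (fun x => F x k l)) y (ee m) - fderiv ℝ (cp (fun x => F x k m)) y (ee l)) =
        cp (fun x => pd m (fun y => F y k l) x - pd l (fun y => F y k m) x) := by
      ext y
      rw [fderiv_cp (hFc k l), fderiv_cp (hFc k m)]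
      unfold cp
      push_cast
      rfl
    rw [e, eLpNorm_cp]
    · exact eLpNorm_mono fun x => curl_le F x k l m
    · have : ∀ j k l, Continuous (pd j (fun y => F y k l)) := fun j k l =>
        ((hFc k l).continuous_fderiv (by simp)).clm_apply continuous_const
      exact (this m k l).sub (this l k m)
  have hij : ∀ i j, eLpNorm (fun x => F x i j) (ENNReal.ofReal ps) volume ≤ C i j * ((N + 27) * (a + b)) := by
    intro i j
    rw [← eLpNorm_cp (hFc i j).continuous]
    refine (hC i j (fun k l => cp (fun x => F x k l)) hcc).trans ?_
    gcongr
    refine (add_le_add (Finset.sum_le_sum fun n _ => hAn n) (Finset.sum_le_sum fun k _ =>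
      Finset.sum_le_sum fun l _ => Finset.sum_le_sum fun m _ => hDn k l m)).trans ?_
    simp only [Finset.sum_const, Finset.card_univ, Fintype.card_fin, nsmul_eq_mul]
    calc (N : ℝ≥0∞) * a + ((3:ℕ):ℝ≥0∞) * (((3:ℕ):ℝ≥0∞) * (((3:ℕ):ℝ≥0∞) * b)) = N * a + 27 * b := by
          push_cast; ring
      _ ≤ (N + 27) * a + (N + 27) * b := by
          gcongr
          · exact le_self_add
          · exact le_add_self
      _ = _ := by ring
  calc eLpNorm F (ENNReal.ofReal ps) volume
      ≤ eLpNorm (∑ i, ∑ j, fun x => ‖F x i j‖) (ENNReal.ofReal ps) volume := by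
        refine eLpNorm_mono_real fun x => ?_
        simp only [Finset.sum_apply]
        exact comp_le _
    _ ≤ ∑ i, ∑ j, eLpNorm (fun x => ‖F x i j‖) (ENNReal.ofReal ps) volume := by
        have hm : ∀ i j, AEStronglyMeasurable (fun x => ‖F x i j‖) volume := fun i j =>
          (hFc i j).continuous.norm.aestronglyMeasurable
        refine (eLpNorm_sum_le (fun i _ => Finset.aestronglyMeasurable_sum _ fun j _ => hm i j) hps1').trans ?_
        exact Finset.sum_le_sum fun i _ => eLpNorm_sum_le (fun j _ => hm i j) hps1'
    _ ≤ ∑ i, ∑ j, C i j * ((N + 27) * (a + b)) := by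
        refine Finset.sum_le_sum fun i _ => Finset.sum_le_sum fun j _ => ?_
        rw [eLpNorm_norm]
        exact hij i j
    _ = _ := by
        push_cast
        simp only [← Finset.sum_mul]
        ring

end KMS

/-- Korn–Maxwell–Sobolev inequality (sufficiency, `1 < p < 3`): if `A` induces an
elliptic operator, then `‖F‖_{L^{p*}(Ω)} ≤ c(‖A[F]‖_{L^{p*}(Ω)} + ‖curl F‖_{Lᵖ(Ω)})`
with `p* = 3p/(3-p)` for all open `Ω ⊂ ℝ³` and `F ∈ C_c^∞(Ω; ℝ^{3×3})`. -/
theorem korn_maxwell_sobolev_sufficiency (N : ℕ)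
    (A : (Fin 3 → Fin 3 → ℝ) →ₗ[ℝ] (Fin N → ℝ)) (hA : IsElliptic A)
    (p : ℝ) (hp1 : 1 < p) (hp3 : p < 3) :
    ∃ c : ℝ, 0 < c ∧
      ∀ Ω : Set (Fin 3 → ℝ), IsOpen Ω →
        ∀ F : (Fin 3 → ℝ) → Fin 3 → Fin 3 → ℝ,
          ContDiff ℝ (⊤ : ℕ∞) F → HasCompactSupport F → tsupport F ⊆ Ω →
            eLpNorm F (ENNReal.ofReal (3 * p / (3 - p))) (volume.restrict Ω) ≤
              ENNReal.ofReal c *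
                (eLpNorm (fun x => A (F x)) (ENNReal.ofReal (3 * p / (3 - p)))
                    (volume.restrict Ω) +
                  eLpNorm (fun x => mcurl F x) (ENNReal.ofReal p)
                    (volume.restrict Ω)) := by
  obtain ⟨C, hC⟩ := KMS.main hA hp1 hp3
  refine ⟨C + 1, by positivity, fun Ω _ F hF hFs hFΩ => ?_⟩
  have h1 : Function.support F ⊆ Ω := (subset_tsupport F).trans hFΩ
  have h2 : Function.support (fun x => A (F x)) ⊆ Ω := fun x hx => h1 (fun h => hx (by simp [h]))
  have h3 : Function.support (fun x => mcurl F x) ⊆ Ω := (KMS.mcurl_supp F).trans hFΩ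
  rw [eLpNorm_restrict_eq_of_support_subset h1, eLpNorm_restrict_eq_of_support_subset h2,
    eLpNorm_restrict_eq_of_support_subset h3]
  refine (hC F hF hFs).trans ?_
  gcongr
  rw [← ENNReal.ofReal_coe_nnreal]
  exact ENNReal.ofReal_le_ofReal (by linarith)
end

section
/- (Korn–Maxwell–Sobolev, necessity) Let 1 ≤ p < 3 and A ∈ 𝓛(ℝ^{3×3}; ℝᴺ). If there is a constant c > 0 such that ‖F‖_{L^{p*}(ℝ³)} ≤ c(‖A[F]‖_{L^{p*}(ℝ³)} + ‖curl F‖_{Lᵖ(ℝ³)}) for all F ∈ C_c^∞(ℝ³; ℝ^{3×3}), then the induced operator 𝔸u = A[∇u] is elliptic. -/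
open MeasureTheory
open scoped ENNReal

/-- The gradient field `v ⊗ ∇g`. -/
noncomputable def gradF (v : Fin 3 → ℝ) (g : (Fin 3 → ℝ) → ℝ) (x : Fin 3 → ℝ) :
    Fin 3 → Fin 3 → ℝ := fun i j => v i * pd j g x

lemma contDiff_pd {g : (Fin 3 → ℝ) → ℝ} (hg : ContDiff ℝ (⊤ : ℕ∞) g) (j : Fin 3) :
    ContDiff ℝ (⊤ : ℕ∞) (pd j g) := by
  unfold pd
  exact (hg.fderiv_right (m := (⊤ : ℕ∞)) (by simp)).clm_apply contDiff_const

lemma gradF_contDiff (v : Fin 3 → ℝ) {g : (Fin 3 → ℝ) → ℝ} (hg : ContDiff ℝ (⊤ : ℕ∞) g) :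
    ContDiff ℝ (⊤ : ℕ∞) (gradF v g) := by
  refine contDiff_pi.2 fun i => contDiff_pi.2 fun j => ?_
  exact contDiff_const.mul (contDiff_pd hg j)

lemma gradF_compact (v : Fin 3 → ℝ) {g : (Fin 3 → ℝ) → ℝ} (hg : HasCompactSupport g) :
    HasCompactSupport (gradF v g) := by
  have h1 := hg.fderiv (𝕜 := ℝ)
  exact h1.comp_left (g := fun (T : (Fin 3 → ℝ) →L[ℝ] ℝ) (i j : Fin 3) =>
    v i * T (Pi.single j 1)) (by ext i j; simp)

lemma pd_comm {g : (Fin 3 → ℝ) → ℝ} (hg : ContDiff ℝ (⊤ : ℕ∞) g) (j k : Fin 3)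
    (x : Fin 3 → ℝ) : pd j (pd k g) x = pd k (pd j g) x := by
  have hs : IsSymmSndFDerivAt ℝ g x :=
    (hg.contDiffAt).isSymmSndFDerivAt (by
      simp only [minSmoothness_of_isRCLikeNormedField]
      exact WithTop.coe_le_coe.2 (le_top : (2 : ℕ∞) ≤ ⊤))
  have hd : DifferentiableAt ℝ (fderiv ℝ g) x :=
    ((hg.fderiv_right (m := (⊤ : ℕ∞)) (by simp)).differentiable (by simp)) x
  have key : ∀ j k : Fin 3, pd j (pd k g) x
      = fderiv ℝ (fderiv ℝ g) x (Pi.single j 1) (Pi.single k 1) := by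
    intro j k
    have : pd k g = fun y => fderiv ℝ g y (Pi.single k 1) := rfl
    rw [this]
    unfold pd
    rw [fderiv_clm_apply hd (by fun_prop)]
    simp
  rw [key, key]
  exact hs _ _

lemma mcurl_gradF (v : Fin 3 → ℝ) {g : (Fin 3 → ℝ) → ℝ} (hg : ContDiff ℝ (⊤ : ℕ∞) g)
    (x : Fin 3 → ℝ) : mcurl (gradF v g) x = 0 := by
  have key : ∀ i j k : Fin 3, pd j (fun y => gradF v g y i k) x = v i * pd j (pd k g) x := by
    intro i j k
    have hd : DifferentiableAt ℝ (pd k g) x := (contDiff_pd hg k).differentiable (by simp) x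
    unfold gradF
    conv_lhs => unfold pd
    change fderiv ℝ (fun y => v i * pd k g y) x (Pi.single j 1) = _
    rw [fderiv_const_mul hd]
    simp [pd]
  ext i j
  unfold mcurl
  simp only [key]
  rw [pd_comm hg 1 2, pd_comm hg 0 2, pd_comm hg 0 1]
  fin_cases j <;> simp

lemma pd_wave {φ : (Fin 3 → ℝ) → ℝ} (hφ : ContDiff ℝ (⊤ : ℕ∞) φ) (ξ : Fin 3 → ℝ) (t θ : ℝ)
    (j : Fin 3) (x : Fin 3 → ℝ) :
    pd j (fun y => φ y * Real.sin (t * (∑ k, ξ k * y k) + θ)) x =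
      t * (φ x * Real.cos (t * (∑ k, ξ k * x k) + θ)) * ξ j
        + Real.sin (t * (∑ k, ξ k * x k) + θ) * pd j φ x := by
  have hd : HasFDerivAt φ (fderiv ℝ φ x) x := (hφ.differentiable (by simp) x).hasFDerivAt
  let L : (Fin 3 → ℝ) →L[ℝ] ℝ := ∑ k, ξ k • ContinuousLinearMap.proj (R := ℝ) k
  have hL : ∀ y, L y = ∑ k, ξ k * y k := by intro y; simp [L]
  have hLj : L (Pi.single j 1) = ξ j := by rw [hL]; simp [Pi.single_apply]
  have h1 : HasFDerivAt (fun y => t * L y + θ) (t • L) x :=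
    (L.hasFDerivAt.const_mul t).add_const θ
  have h2 : HasFDerivAt (fun y => φ y * Real.sin (t * L y + θ)) _ x := hd.mul h1.sin
  simp only [← hL]
  unfold pd
  rw [h2.fderiv]
  simp [hLj]
  ring

/-- Korn–Maxwell–Sobolev inequality (necessity): for `1 ≤ p < 3`, if
`‖F‖_{L^{p*}} ≤ c(‖A[F]‖_{L^{p*}} + ‖curl F‖_{Lᵖ})` holds on `ℝ³` for all
`F ∈ C_c^∞(ℝ³; ℝ^{3×3})`, then the induced operator `𝔸u = A[∇u]` is elliptic, i.e.
the symbol `v ↦ A[v ⊗ ξ]` is injective for all `ξ ≠ 0`. -/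
theorem korn_maxwell_sobolev_necessity (N : ℕ)
    (A : (Fin 3 → Fin 3 → ℝ) →ₗ[ℝ] (Fin N → ℝ))
    (p : ℝ) (hp1 : 1 ≤ p) (hp3 : p < 3) (c : ℝ) (hc : 0 < c)
    (h : ∀ F : (Fin 3 → ℝ) → Fin 3 → Fin 3 → ℝ,
      ContDiff ℝ (⊤ : ℕ∞) F → HasCompactSupport F →
        eLpNorm F (ENNReal.ofReal (3 * p / (3 - p))) volume ≤
          ENNReal.ofReal c *
            (eLpNorm (fun x => A (F x)) (ENNReal.ofReal (3 * p / (3 - p))) volume +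
              eLpNorm (fun x => mcurl F x) (ENNReal.ofReal p) volume)) :
    ∀ ξ : Fin 3 → ℝ, ξ ≠ 0 →
      Function.Injective (fun v : Fin 3 → ℝ => A (fun i j => v i * ξ j)) := by
  intro ξ hξ
  have hinj : ∀ v : Fin 3 → ℝ, A (fun i j => v i * ξ j) = 0 → v = 0 := by
    intro v hv
    by_contra hv0
    set q : ℝ≥0∞ := ENNReal.ofReal (3 * p / (3 - p)) with hq
    have hq1 : 1 ≤ q := by
      rw [hq, ← ENNReal.ofReal_one]
      apply ENNReal.ofReal_le_ofReal
      rw [le_div_iff₀ (by linarith)]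
      linarith
    let b : ContDiffBump (0 : Fin 3 → ℝ) := default
    let φ : (Fin 3 → ℝ) → ℝ := fun x => b x
    have hφ : ContDiff ℝ (⊤ : ℕ∞) φ := b.contDiff
    have hφc : HasCompactSupport φ := b.hasCompactSupport
    have hφ0 : φ 0 = 1 := b.one_of_mem_closedBall (by simp [b.rIn_pos.le])
    let M : Fin 3 → Fin 3 → ℝ := fun i j => v i * ξ j
    have hAM : A M = 0 := hv
    have hM : M ≠ 0 := by
      obtain ⟨i, hi⟩ := Function.ne_iff.1 hv0
      obtain ⟨j, hj⟩ := Function.ne_iff.1 hξ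
      intro h0
      have := congrFun (congrFun h0 i) j
      exact mul_ne_zero hi hj this
    have hAc : Continuous A := A.continuous_of_finiteDimensional
    let D := gradF v φ
    have hD : Continuous D := (gradF_contDiff v hφ).continuous
    have hDc : HasCompactSupport D := gradF_compact v hφc
    have hAD : Continuous (fun x => A (D x)) := hAc.comp hD
    have hADc : HasCompactSupport (fun x => A (D x)) := hDc.comp_left (map_zero A)
    let K : ℝ≥0∞ := ENNReal.ofReal c * eLpNorm (fun x => A (D x)) q volume + eLpNorm D q volume
    have hK : K ≠ ∞ := by
      refine ENNReal.add_ne_top.2 ⟨ENNReal.mul_ne_top ENNReal.ofReal_ne_top ?_, ?_⟩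
      · exact (hAD.memLp_of_hasCompactSupport hADc).eLpNorm_ne_top
      · exact (hD.memLp_of_hasCompactSupport hDc).eLpNorm_ne_top
    let w : ℝ → ℝ → (Fin 3 → ℝ) → ℝ := fun t θ x => t * (∑ k, ξ k * x k) + θ
    have hw : ∀ t θ, ContDiff ℝ (⊤ : ℕ∞) (w t θ) := by
      intro t θ
      simp only [w]
      fun_prop
    let H : ℝ → ℝ → (Fin 3 → ℝ) → Fin 3 → Fin 3 → ℝ :=
      fun t θ x => (φ x * Real.cos (w t θ x)) • M
    have hH : ∀ t θ, Continuous (H t θ) := by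
      intro t θ
      have := (hw t θ).continuous
      have := hφ.continuous
      simp only [H]
      fun_prop
    have main : ∀ t θ : ℝ, ‖t‖ₑ * eLpNorm (H t θ) q volume ≤ K := by
      intro t θ
      let g : (Fin 3 → ℝ) → ℝ := fun y => φ y * Real.sin (w t θ y)
      have hg : ContDiff ℝ (⊤ : ℕ∞) g := hφ.mul (hw t θ).sin
      have hgc : HasCompactSupport g := hφc.mul_right
      have hF : ∀ x, gradF v g x = t • H t θ x + Real.sin (w t θ x) • D x := by
        intro x
        ext i j
        have := pd_wave hφ ξ t θ j x
        simp only [gradF, g, H, D, M, w, Pi.add_apply, Pi.smul_apply, smul_eq_mul]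
        rw [this]
        ring
      have hsD : eLpNorm (fun x => Real.sin (w t θ x) • D x) q volume ≤ eLpNorm D q volume := by
        apply eLpNorm_mono
        intro x
        rw [norm_smul]
        exact mul_le_of_le_one_left (norm_nonneg _) (Real.abs_sin_le_one _)
      have hsc : Continuous (fun x => Real.sin (w t θ x) • D x) := by
        have := (hw t θ).continuous
        fun_prop
      have hAF : eLpNorm (fun x => A (gradF v g x)) q volume
          ≤ eLpNorm (fun x => A (D x)) q volume := by
        apply eLpNorm_mono
        intro x
        rw [hF x]
        simp only [H, map_add, map_smul, hAM, smul_zero, zero_add]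
        rw [norm_smul]
        exact mul_le_of_le_one_left (norm_nonneg _) (Real.abs_sin_le_one _)
      have h0 := h (gradF v g) (gradF_contDiff v hg) (gradF_compact v hgc)
      have hcurl : (fun x => mcurl (gradF v g) x) = 0 := by
        funext x
        exact mcurl_gradF v hg x
      rw [hcurl, eLpNorm_zero, add_zero] at h0
      have e1 : t • H t θ = gradF v g - fun x => Real.sin (w t θ x) • D x := by
        funext x
        simp [hF x]
      rw [← eLpNorm_const_smul, e1]
      calc _ ≤ eLpNorm (gradF v g) q volume
            + eLpNorm (fun x => Real.sin (w t θ x) • D x) q volume :=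
            eLpNorm_sub_le (gradF_contDiff v hg).continuous.aestronglyMeasurable
              hsc.aestronglyMeasurable hq1
        _ ≤ K := by
            refine add_le_add (h0.trans ?_) hsD
            gcongr
    let G : (Fin 3 → ℝ) → Fin 3 → Fin 3 → ℝ := fun x => φ x • M
    have hG : Continuous G := by
      have := hφ.continuous
      simp only [G]
      fun_prop
    have hGn : ∀ n : ℕ, (n : ℝ≥0∞) * eLpNorm G q volume ≤ 2 * K := by
      intro n
      have h1 : eLpNorm G q volume ≤
          eLpNorm (H n 0) q volume + eLpNorm (H n (Real.pi / 2)) q volume := by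
        calc eLpNorm G q volume
            ≤ eLpNorm ((fun x => ‖H n 0 x‖) + fun x => ‖H n (Real.pi / 2) x‖) q volume := by
              apply eLpNorm_mono
              intro x
              have e : w n (Real.pi / 2) x = w n 0 x + Real.pi / 2 := by simp [w]
              simp only [G, H, Pi.add_apply]
              refine le_trans ?_ (le_abs_self _)
              rw [e, Real.cos_add_pi_div_two, norm_smul, norm_smul, norm_smul, ← add_mul,
                norm_mul (φ x), norm_mul (φ x), ← mul_add]
              refine mul_le_mul_of_nonneg_right ?_ (norm_nonneg _)
              refine le_mul_of_one_le_right (norm_nonneg _) ?_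
              rw [norm_neg, Real.norm_eq_abs, Real.norm_eq_abs]
              have a1 := Real.sin_sq_add_cos_sq (w n 0 x)
              have a2 := Real.abs_sin_le_one (w n 0 x)
              have a3 := Real.abs_cos_le_one (w n 0 x)
              have a4 := abs_nonneg (Real.sin (w n 0 x))
              have a5 := abs_nonneg (Real.cos (w n 0 x))
              rw [← sq_abs, ← sq_abs (Real.cos _)] at a1
              nlinarith
          _ ≤ _ := by
              refine (eLpNorm_add_le (hH _ _).norm.aestronglyMeasurable
                (hH _ _).norm.aestronglyMeasurable hq1).trans ?_
              rw [eLpNorm_norm, eLpNorm_norm]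
      have m1 := main n 0
      have m2 := main n (Real.pi / 2)
      have en : ‖(n : ℝ)‖ₑ = (n : ℝ≥0∞) := by
        rw [Real.enorm_natCast]
      rw [en] at m1 m2
      calc (n : ℝ≥0∞) * eLpNorm G q volume
          ≤ n * (eLpNorm (H n 0) q volume + eLpNorm (H n (Real.pi / 2)) q volume) := by gcongr
        _ ≤ K + K := by rw [mul_add]; exact add_le_add m1 m2
        _ = 2 * K := (two_mul K).symm
    have hG0 : eLpNorm G q volume = 0 := by
      by_contra hne
      have hK2 : 2 * K ≠ ∞ := ENNReal.mul_ne_top (by simp) hK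
      obtain ⟨n, hn⟩ := ENNReal.exists_nat_mul_gt hne hK2
      exact absurd (hGn n) (not_le.2 hn)
    rw [eLpNorm_eq_zero_iff hG.aestronglyMeasurable (by positivity)] at hG0
    have hGz : G = 0 := (Continuous.ae_eq_iff_eq volume hG continuous_const).1 hG0
    have := congrFun hGz 0
    simp only [G, hφ0, one_smul] at this
    exact hM this
  intro v₁ v₂ h12
  have h3 : A (fun i j => (v₁ - v₂) i * ξ j) = 0 := by
    have : (fun i j => (v₁ - v₂) i * ξ j : Fin 3 → Fin 3 → ℝ)
        = (fun i j => v₁ i * ξ j) - fun i j => v₂ i * ξ j := by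
      ext i j
      simp [sub_mul]
    rw [this, map_sub]
    exact sub_eq_zero.2 h12
  exact sub_eq_zero.1 (hinj _ h3)
end
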